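/- arXiv:1306.5708 — 11 statements merged into one kernel-verified Lean document; each statement's English description precedes it below -/
import Mathlib

section
/- Let α, β be permutations of {1,…,n} and let γ be one of the cycles appearing in the cycle decomposition of β (a nontrivial cycle factor of β). Then α(β(x)) = β(α(x)) for every x in the support of γ if and only if the conjugate αγα⁻¹ is also one of the cycles appearing in the cycle decomposition of β. -/
theorem stmt2 (n : ℕ) (α β γ : Equiv.Perm (Fin n)) (hγ : γ ∈ β.cycleFactorsFinset) :
    (∀ x ∈ γ.support, α (β x) = β (α x)) ↔ α * γ * α⁻¹ ∈ β.cycleFactorsFinset := by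
  rw [Equiv.Perm.mem_cycleFactorsFinset_iff] at hγ ⊢
  obtain ⟨hc, hb⟩ := hγ
  have key : ∀ x, x ∈ γ.support ↔ α x ∈ (α * γ * α⁻¹).support := by
    intro x
    simp [Equiv.Perm.mem_support]
  constructor
  · intro h
    refine ⟨hc.conj, fun a ha => ?_⟩
    obtain ⟨x, rfl⟩ := α.surjective a
    have hx := (key x).2 ha
    rw [← h x hx, ← hb x hx]
    simp
  · rintro ⟨-, h⟩ x hx
    have h1 := h (α x) ((key x).1 hx)
    rw [← h1, ← hb x hx]
    simp
end

section
/- Let β be a permutation of {1,…,n} whose maximum cycle length in its cycle decomposition is m, and let γ be a cycle of length m in the cycle decomposition of β. If a permutation α satisfies α(β(x)) = β(α(x)) for at least m−1 of the m points x in the support of γ (equivalently, the number of points x in the support of γ with α(β(x)) ≠ β(α(x)) is at most 1), then α(β(x)) = β(α(x)) for every point x in the support of γ. -/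
theorem stmt4 (n m : ℕ) (α β γ : Equiv.Perm (Fin n))
    (hmax : ∀ δ ∈ β.cycleFactorsFinset, δ.support.card ≤ m)
    (hγ : γ ∈ β.cycleFactorsFinset) (hγm : γ.support.card = m)
    (h : (γ.support.filter fun x => α (β x) ≠ β (α x)).card ≤ 1) :
    ∀ x ∈ γ.support, α (β x) = β (α x) := by
  intro x hx
  by_contra hbad
  have hcyc : γ.IsCycle := (Equiv.Perm.mem_cycleFactorsFinset_iff.mp hγ).1
  have hag : ∀ a ∈ γ.support, γ a = β a := (Equiv.Perm.mem_cycleFactorsFinset_iff.mp hγ).2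
  have hord : orderOf γ = m := by rw [hcyc.orderOf, hγm]
  have hmpos : 0 < m := by rw [← hγm]; exact Finset.card_pos.mpr ⟨x, hx⟩
  have good : ∀ a ∈ γ.support, a ≠ x → α (β a) = β (α a) := by
    intro a ha hax
    by_contra hb
    rw [Finset.card_le_one] at h
    exact hax (h a (by simp only [Finset.mem_filter]; exact ⟨ha, hb⟩) x
      (by simp only [Finset.mem_filter]; exact ⟨hx, hbad⟩))
  -- no early return
  have ret : ∀ a ∈ γ.support, ∀ i, 0 < i → i < m → (γ ^ i) a ≠ a := by
    intro a ha i hi him hfix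
    have h1 : γ ^ i = 1 := hcyc.pow_eq_one_iff.mpr ⟨a, Equiv.Perm.mem_support.mp ha, hfix⟩
    have := orderOf_dvd_of_pow_eq_one h1
    rw [hord] at this
    exact absurd (Nat.le_of_dvd hi this) (by omega)
  have hy : γ x ∈ γ.support := Equiv.Perm.apply_mem_support.mpr hx
  have mem : ∀ i, (γ ^ i) (γ x) ∈ γ.support := fun i =>
    Equiv.Perm.pow_apply_mem_support.mpr hy
  have key : ∀ i, i < m → α ((γ ^ i) (γ x)) = (β ^ i) (α (γ x)) := by
    intro i
    induction i with
    | zero => intro _; simp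
    | succ i ih =>
      intro hi
      have hne : (γ ^ i) (γ x) ≠ x := by
        rw [← Equiv.Perm.mul_apply, ← pow_succ]
        exact ret x hx (i + 1) (by omega) hi
      rw [pow_succ', pow_succ', Equiv.Perm.mul_apply, Equiv.Perm.mul_apply, ← ih (by omega),
        hag _ (mem i), good _ (mem i) hne]
  have noret : ∀ k, 0 < k → k < m → (β ^ k) (α (γ x)) ≠ α (γ x) := by
    intro k hk hkm hfix
    rw [← key k hkm] at hfix
    exact ret _ hy k hk hkm (α.injective hfix)
  have full : (β ^ m) (α (γ x)) = α (γ x) := by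
    by_cases hz : β (α (γ x)) = α (γ x)
    · exact Equiv.Perm.pow_apply_eq_self_of_apply_eq_self hz m
    · have hδ := Equiv.Perm.cycleOf_mem_cycleFactorsFinset_iff.mpr (Equiv.Perm.mem_support.mpr hz)
      have hle := hmax _ hδ
      have hc := (Equiv.Perm.mem_cycleFactorsFinset_iff.mp hδ).1
      have hfix : (β ^ (β.cycleOf (α (γ x))).support.card) (α (γ x)) = α (γ x) := by
        rw [← Equiv.Perm.cycleOf_pow_apply_self, ← hc.orderOf, pow_orderOf_eq_one]
        rfl
      have hpos : 0 < (β.cycleOf (α (γ x))).support.card := by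
        rw [← hc.orderOf]; exact orderOf_pos _
      rcases hle.lt_or_eq with hlt | heq
      · exact absurd hfix (noret _ hpos hlt)
      · rwa [heq] at hfix
  apply hbad
  have hx' : (γ ^ (m - 1)) (γ x) = x := by
    rw [← Equiv.Perm.mul_apply, ← pow_succ, Nat.sub_add_cancel hmpos, ← hord,
      pow_orderOf_eq_one]
    rfl
  have h2 := key (m - 1) (by omega)
  rw [hx'] at h2
  rw [h2, ← Equiv.Perm.mul_apply β (β ^ (m - 1)), ← pow_succ', Nat.sub_add_cancel hmpos, full, hag x hx]
end

section
/- Let α, β be permutations of {1,…,n} and let γ' be a cycle of length i in the cycle decomposition of β. If every point y in the support of γ' satisfies α(β(α⁻¹(y))) = β(y) (i.e., every point of γ' is the image under α of a good commuting point of α and β), then there exists a cycle γ of length i in the cycle decomposition of β with αγα⁻¹ = γ'. -/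
theorem stmt5 (n i : ℕ) (α β γ' : Equiv.Perm (Fin n))
    (hγ' : γ' ∈ β.cycleFactorsFinset) (hi : γ'.support.card = i)
    (h : ∀ y ∈ γ'.support, α (β (α⁻¹ y)) = β y) :
    ∃ γ ∈ β.cycleFactorsFinset, γ.support.card = i ∧ α * γ * α⁻¹ = γ' := by
  have e : α * (α⁻¹ * γ' * α) * α⁻¹ = γ' := by group
  refine ⟨α⁻¹ * γ' * α, ?_, ?_, e⟩
  · rw [← Equiv.Perm.mem_cycleFactorsFinset_conj β α, e]
    rw [Equiv.Perm.mem_cycleFactorsFinset_iff] at hγ' ⊢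
    refine ⟨hγ'.1, fun a ha => ?_⟩
    rw [hγ'.2 a ha]
    exact (h a ha).symm
  · rw [← Equiv.Perm.card_support_conj (σ := α), e, hi]
end

section
/- Let β be a permutation of {1,…,n} and let k be a nonnegative integer. Then the cardinality of the centralizer C_{S_n}(β) divides c(k,β), the number of permutations α with H(αβ,βα) = k. -/
/-- Hamming metric between two permutations of `Fin n`. -/
def ham {n : ℕ} (σ τ : Equiv.Perm (Fin n)) : ℕ :=
  Finset.card (Finset.univ.filter fun a => σ a ≠ τ a)

/-- `kcomm k β` is the number of permutations `α` that `k`-commute with `β`,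
i.e. with `H(αβ, βα) = k`. -/
noncomputable def kcomm {n : ℕ} (k : ℕ) (β : Equiv.Perm (Fin n)) : ℕ :=
  Nat.card {α : Equiv.Perm (Fin n) // ham (α * β) (β * α) = k}

theorem ham_mul_right {n : ℕ} (σ τ c : Equiv.Perm (Fin n)) :
    ham (σ * c) (τ * c) = ham σ τ := by
  unfold ham
  refine Finset.card_bij (fun a _ => c a) ?_ ?_ ?_
  · intro a ha
    rw [Finset.mem_filter] at ha ⊢
    exact ⟨Finset.mem_univ _, ha.2⟩
  · intro a _ b _ h
    exact c.injective h
  · intro b hb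
    rw [Finset.mem_filter] at hb
    refine ⟨c.symm b, ?_, by simp⟩
    rw [Finset.mem_filter]
    exact ⟨Finset.mem_univ _, by simpa using hb.2⟩

theorem stmt8 (n k : ℕ) (β : Equiv.Perm (Fin n)) :
    Nat.card {τ : Equiv.Perm (Fin n) // τ * β = β * τ} ∣ kcomm k β := by
  let C : Subgroup (Equiv.Perm (Fin n)) := Subgroup.centralizer {β}
  let S : Set (Equiv.Perm (Fin n)) := {α | ham (α * β) (β * α) = k}
  let t : Set (Equiv.Perm (Fin n) ⧸ C) := QuotientGroup.mk '' S
  have hC : ∀ τ, τ * β = β * τ ↔ τ ∈ C := by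
    intro τ
    rw [Subgroup.mem_centralizer_singleton_iff]
  have hS : (QuotientGroup.mk : _ → Equiv.Perm (Fin n) ⧸ C) ⁻¹' t = S := by
    ext x
    constructor
    · rintro ⟨y, hy, hxy⟩
      have h1 := (hC _).2 (QuotientGroup.eq.1 hxy)
      obtain ⟨c, hc⟩ : ∃ c, c = y⁻¹ * x := ⟨_, rfl⟩
      rw [← hc] at h1
      have hx : x = y * c := by rw [hc]; group
      have hy' : ham (y * β) (β * y) = k := hy
      change ham (x * β) (β * x) = k
      rw [hx, mul_assoc, h1, ← mul_assoc, ← mul_assoc, ham_mul_right, hy']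
    · intro h
      exact ⟨x, h, rfl⟩
  have e := Nat.card_congr (QuotientGroup.preimageMkEquivSubgroupProdSet C t)
  rw [hS, Nat.card_prod] at e
  have e2 : Nat.card {τ : Equiv.Perm (Fin n) // τ * β = β * τ} = Nat.card C :=
    Nat.card_congr (Equiv.subtypeEquivRight hC)
  rw [e2]
  exact ⟨_, e⟩
end

section
/- Let β be a permutation of {1,…,n} whose cycle type does not consist of distinct odd integers; that is (counting fixed points as cycles of length 1), either β has some cycle of even length or β has two cycles of the same length. Then for every nonnegative integer k, exactly one half of the permutations in C(k,β) are odd: the number of odd permutations α with H(αβ,βα) = k equals the number of even permutations α with H(αβ,βα) = k. In particular c(k,β) is even. -/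
theorem exists_odd_commuting (n : ℕ) (β : Equiv.Perm (Fin n))
    (h : (∃ i ∈ β.cycleType, Even i) ∨ (∃ i, 2 ≤ Multiset.count i β.cycleType) ∨
      2 ≤ (Finset.univ.filter fun x => β x = x).card) :
    ∃ γ : Equiv.Perm (Fin n), γ * β = β * γ ∧ Equiv.Perm.sign γ = -1 := by
  by_contra hc
  push Not at hc
  have hle : Subgroup.centralizer {β} ≤ alternatingGroup (Fin n) := by
    intro γ hγ
    rw [Equiv.Perm.mem_alternatingGroup]
    have := hc γ (Subgroup.mem_centralizer_singleton_iff.mp hγ)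
    rcases Int.units_eq_one_or (Equiv.Perm.sign γ) with h1 | h1
    · exact h1
    · exact absurd h1 this
  obtain ⟨h1, h2, h3⟩ :=
    Equiv.Perm.centralizer_le_alternating_iff.mp hle
  rcases h with ⟨i, hi, he⟩ | ⟨i, hi⟩ | hf
  · exact (Nat.not_even_iff_odd.mpr (h1 i hi)) he
  · have := h3 i
    omega
  · have e : β.supportᶜ = Finset.univ.filter fun x => β x = x := by
      ext x; simp
    have := Finset.card_add_card_compl β.support
    rw [e] at this
    rw [Equiv.Perm.sum_cycleType] at h2
    omega

theorem ham_mul_left {n : ℕ} (β γ α : Equiv.Perm (Fin n)) (h : γ * β = β * γ) :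
    ham ((γ * α) * β) (β * (γ * α)) = ham (α * β) (β * α) := by
  have e : β * (γ * α) = γ * (β * α) := by rw [← mul_assoc, ← h, mul_assoc]
  rw [e, mul_assoc]
  unfold ham
  congr 1
  ext a
  rw [Finset.mem_filter, Finset.mem_filter, Equiv.Perm.mul_apply γ, Equiv.Perm.mul_apply γ,
    γ.injective.ne_iff]

/-- If the cycle type of `β` (fixed points counted as cycles of length 1) does not
consist of distinct odd integers, then exactly one half of the permutations
`k`-commuting with `β` are odd; in particular `c(k, β)` is even. -/
theorem stmt9 (n : ℕ) (β : Equiv.Perm (Fin n))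
    (h : (∃ i ∈ β.cycleType, Even i) ∨ (∃ i, 2 ≤ Multiset.count i β.cycleType) ∨
      2 ≤ (Finset.univ.filter fun x => β x = x).card)
    (k : ℕ) :
    Nat.card {α : Equiv.Perm (Fin n) //
        ham (α * β) (β * α) = k ∧ Equiv.Perm.sign α = -1} =
      Nat.card {α : Equiv.Perm (Fin n) //
        ham (α * β) (β * α) = k ∧ Equiv.Perm.sign α = 1} ∧
    Even (kcomm k β) := by
  obtain ⟨γ, hγ, hs⟩ := exists_odd_commuting n β h
  have key : Nat.card {α : Equiv.Perm (Fin n) //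
        ham (α * β) (β * α) = k ∧ Equiv.Perm.sign α = -1} =
      Nat.card {α : Equiv.Perm (Fin n) //
        ham (α * β) (β * α) = k ∧ Equiv.Perm.sign α = 1} := by
    refine Nat.card_congr ((Equiv.mulLeft γ).subtypeEquiv fun α => ?_)
    rw [Equiv.coe_mulLeft, ham_mul_left β γ α hγ, Equiv.Perm.sign_mul, hs]
    rw [neg_one_mul, neg_eq_iff_eq_neg]
  refine ⟨key, ?_⟩
  refine ⟨Nat.card {α : Equiv.Perm (Fin n) //
        ham (α * β) (β * α) = k ∧ Equiv.Perm.sign α = 1}, ?_⟩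
  nth_rewrite 1 [← key]
  classical
  simp only [kcomm, Nat.card_eq_fintype_card, Fintype.card_subtype]
  rw [← Finset.card_union_of_disjoint]
  · congr 1
    ext α
    rcases Int.units_eq_one_or (Equiv.Perm.sign α) with h1 | h1 <;> simp [h1]
  · rw [Finset.disjoint_filter]
    rintro α - ⟨-, h1⟩ ⟨-, h2⟩
    rw [h1] at h2
    exact absurd h2 (by decide)
end

section
/- Let α, β be permutations of {1,…,n}. If some β-orbit (a cycle of β, where fixed points of β are counted as singleton orbits) contains exactly one bad commuting point of α and β, then there exists a β-orbit containing at least two bad commuting points of α and β. -/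
theorem stmt11 (n : ℕ) (α β : Equiv.Perm (Fin n))
    (h : ∃ a : Fin n, (Finset.univ.filter fun x : Fin n =>
        β.SameCycle a x ∧ (α * β) x ≠ (β * α) x).card = 1) :
    ∃ b : Fin n, 2 ≤ (Finset.univ.filter fun x : Fin n =>
        β.SameCycle b x ∧ (α * β) x ≠ (β * α) x).card := by
  by_contra hcon
  push Not at hcon
  obtain ⟨a, ha⟩ := h
  obtain ⟨x, hx⟩ := Finset.card_pos.mp (by rw [ha]; exact Nat.one_pos)
  have hxbad := (Finset.mem_filter.mp hx).2.2
  -- uniqueness of the bad point in each cycle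
  have huniq : ∀ y z : Fin n, β.SameCycle y z → (α * β) y ≠ (β * α) y →
      (α * β) z ≠ (β * α) z → z = y := by
    intro y z hyz hy hz
    have h1 := Nat.le_of_lt_succ (hcon y)
    rw [Finset.card_le_one] at h1
    exact h1 z (by simp only [Finset.mem_filter, Finset.mem_univ, true_and]; exact ⟨hyz, hz⟩)
      y (by simp only [Finset.mem_filter, Finset.mem_univ, true_and]
            exact ⟨Equiv.Perm.SameCycle.refl _ _, hy⟩)
  obtain ⟨γ, hγ⟩ : ∃ γ : Equiv.Perm (Fin n), γ = α⁻¹ * β * α⁻¹⁻¹ := ⟨_, rfl⟩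
  have hγa : ∀ y, γ y = α⁻¹ (β (α y)) := by intro y; rw [hγ]; simp
  have hgood : ∀ y, (α * β) y = (β * α) y ↔ γ y = β y := by
    intro y
    rw [hγa, Equiv.Perm.inv_eq_iff_eq, Equiv.Perm.mul_apply, Equiv.Perm.mul_apply, eq_comm]
  simp only [ne_eq, hgood] at huniq hxbad
  have hstep : ∀ y, γ.SameCycle y (β y) := by
    intro y
    by_cases hy : γ y = β y
    · rw [← hy]; exact ⟨1, by simp⟩
    · have key : ∀ k : ℕ, γ.SameCycle (β y) ((β ^ (k + 1)) y) := by
        intro k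
        induction k with
        | zero => simp [Equiv.Perm.SameCycle.refl]
        | succ k ih =>
          rw [pow_succ' β (k + 1), Equiv.Perm.mul_apply]
          by_cases hg : γ ((β ^ (k + 1)) y) = β ((β ^ (k + 1)) y)
          · rw [← hg]
            exact ih.trans ⟨1, by simp⟩
          · have : (β ^ (k + 1)) y = y := huniq y _ ⟨(k + 1 : ℕ), by rw [zpow_natCast]⟩ hy hg
            rw [this]
      have h2 := key (orderOf β - 1)
      rw [Nat.sub_add_cancel (orderOf_pos β), pow_orderOf_eq_one] at h2
      exact h2.symm
  have hsub : ∀ y z, β.SameCycle y z → γ.SameCycle y z := by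
    intro y z hyz
    obtain ⟨k, -, -, hk⟩ := hyz.exists_pow_eq'' 
    rw [← hk]
    clear hk
    induction k with
    | zero => simp [Equiv.Perm.SameCycle.refl]
    | succ k ih =>
      rw [pow_succ', Equiv.Perm.mul_apply]
      exact ih.trans (hstep _)
  classical
  have hsubset : (Finset.univ.filter fun p : Fin n × Fin n => β.SameCycle p.1 p.2) ⊆
      (Finset.univ.filter fun p : Fin n × Fin n => γ.SameCycle p.1 p.2) := by
    intro p hp
    simp only [Finset.mem_filter, Finset.mem_univ, true_and] at hp ⊢
    exact hsub _ _ hp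
  have hcard : (Finset.univ.filter fun p : Fin n × Fin n => γ.SameCycle p.1 p.2).card ≤
      (Finset.univ.filter fun p : Fin n × Fin n => β.SameCycle p.1 p.2).card := by
    apply Finset.card_le_card_of_injOn (fun p => (α p.1, α p.2))
    · intro p hp
      simp only [Finset.coe_filter, Finset.mem_univ, true_and, Set.mem_ofPred_eq] at hp ⊢
      rw [hγ, Equiv.Perm.sameCycle_conj] at hp
      simpa using hp
    · rintro ⟨p, q⟩ - ⟨r, s⟩ - hpr
      simpa using hpr
  have heq := Finset.eq_of_subset_of_card_le hsubset hcard
  have hmem : (x, γ x) ∈ (Finset.univ.filter fun p : Fin n × Fin n => β.SameCycle p.1 p.2) := by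
    rw [heq]
    simp only [Finset.mem_filter, Finset.mem_univ, true_and]
    exact ⟨1, by simp⟩
  simp only [Finset.mem_filter, Finset.mem_univ, true_and] at hmem
  have hz : β.SameCycle x (β⁻¹ (γ x)) := hmem.trans ⟨-1, by simp⟩
  have hbz : β (β⁻¹ (γ x)) = γ x := by simp
  have hzx : β⁻¹ (γ x) = x := by
    by_cases hg : γ (β⁻¹ (γ x)) = β (β⁻¹ (γ x))
    · rw [hbz] at hg
      exact γ.injective hg
    · exact huniq x _ hz hxbad hg
  rw [hzx] at hbz
  exact hxbad hbz.symm
end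

section
/- Let β be a permutation of {1,…,n} and let k ≥ 1. There is no permutation α of {1,…,n} such that H(αβ,βα) = k and every β-orbit (cycle of β, with fixed points counted as singleton orbits) contains at most one bad commuting point of α and β; equivalently, the number of permutations α that k-commute with β in such a way that the k bad commuting points lie in k distinct cycles of β, one in each, is zero. -/
open Function in
theorem aux_run {n : ℕ} (α β : Equiv.Perm (Fin n)) (y : Fin n)
    (h : ∀ i, i + 1 < minimalPeriod β y → α (β (β^[i] y)) = β (α (β^[i] y))) :
    ∀ i, i < minimalPeriod β y → α (β^[i] y) = β^[i] (α y) := by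
  intro i
  induction i with
  | zero => intro _; rfl
  | succ i ih =>
    intro hi
    rw [iterate_succ_apply', iterate_succ_apply', h i hi, ih (by omega)]

theorem aux_per {n : ℕ} (β : Equiv.Perm (Fin n)) (y : Fin n) :
    y ∈ Function.periodicPts β :=
  β.injective.mem_periodicPts y

open Function in
theorem aux_le {n : ℕ} (α β : Equiv.Perm (Fin n)) (y : Fin n)
    (h : ∀ i, i < minimalPeriod β y → α (β^[i] y) = β^[i] (α y)) :
    minimalPeriod β y ≤ minimalPeriod β (α y) := by
  by_contra hlt
  push Not at hlt
  have h1 := h _ hlt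
  rw [iterate_minimalPeriod] at h1
  have h2 : IsPeriodicPt β (minimalPeriod β (α y)) y := α.injective h1
  have := h2.minimalPeriod_le (minimalPeriod_pos_of_mem_periodicPts (aux_per β (α y)))
  omega

open Function in
theorem aux_orbit {n : ℕ} (α β : Equiv.Perm (Fin n)) (y : Fin n)
    (h : ∀ i, i < minimalPeriod β y → α (β^[i] y) = β^[i] (α y)) (x : Fin n)
    (hx : β.SameCycle y x) :
    minimalPeriod β x = minimalPeriod β y ∧
      minimalPeriod β (α x) = minimalPeriod β (α y) := by
  obtain ⟨j, hj⟩ := hx.exists_nat_pow_eq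
  rw [Equiv.Perm.coe_pow, ← iterate_mod_minimalPeriod_eq] at hj
  have hlt := Nat.mod_lt j (minimalPeriod_pos_of_mem_periodicPts (aux_per β y))
  subst hj
  rw [h _ hlt, minimalPeriod_apply_iterate (aux_per β y),
    minimalPeriod_apply_iterate (aux_per β (α y))]
  exact ⟨rfl, rfl⟩

open Function in
theorem aux_main {n : ℕ} (α β : Equiv.Perm (Fin n))
    (hu : ∀ a b, β.SameCycle a b → α (β a) ≠ β (α a) → α (β b) ≠ β (α b) → a = b)
    (x : Fin n) :
    minimalPeriod β x ≤ minimalPeriod β (α x) ∧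
      (α (β x) ≠ β (α x) → minimalPeriod β x < minimalPeriod β (α x)) := by
  by_cases hb : ∃ a, β.SameCycle a x ∧ α (β a) ≠ β (α a)
  · obtain ⟨a, hax, ha⟩ := hb
    have hper : minimalPeriod β (β a) = minimalPeriod β a :=
      minimalPeriod_apply (aux_per β a)
    have hpos : 0 < minimalPeriod β a := minimalPeriod_pos_of_mem_periodicPts (aux_per β a)
    have hrun := aux_run α β (β a) (by
      intro i hi
      by_contra hbad
      have hs : β.SameCycle a (β^[i] (β a)) :=
        ⟨((i + 1 : ℕ) : ℤ), by rw [zpow_natCast, Equiv.Perm.coe_pow, iterate_succ_apply]⟩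
      have e := hu _ _ hs ha hbad
      rw [← iterate_succ_apply] at e
      have h2 : IsPeriodicPt β (i + 1) a := e.symm
      have := h2.minimalPeriod_le (by omega)
      omega)
    have hle := aux_le α β (β a) hrun
    have horb := aux_orbit α β (β a) hrun x (Equiv.Perm.sameCycle_apply_left.2 hax)
    have hne : minimalPeriod β (β a) ≠ minimalPeriod β (α (β a)) := by
      intro heq
      apply ha
      have h1 := hrun (minimalPeriod β (β a) - 1) (by omega)
      have h2 : β^[minimalPeriod β (β a) - 1] (β a) = a := by
        rw [← iterate_succ_apply, hper, Nat.succ_eq_add_one, Nat.sub_add_cancel hpos,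
          iterate_minimalPeriod]
      rw [h2] at h1
      rw [h1, ← iterate_succ_apply' β, heq, Nat.succ_eq_add_one,
        Nat.sub_add_cancel (by omega), iterate_minimalPeriod]
    rw [horb.1, horb.2]
    exact ⟨hle, fun _ => lt_of_le_of_ne hle hne⟩
  · push Not at hb
    refine ⟨aux_le α β x (aux_run α β x ?_), fun h => absurd (hb x (Equiv.Perm.SameCycle.refl _ _)) h⟩
    intro i _
    apply hb
    apply Equiv.Perm.SameCycle.symm
    exact ⟨(i : ℤ), by rw [zpow_natCast, Equiv.Perm.coe_pow]⟩

/-- For `k ≥ 1` there is no permutation `α` that `k`-commutes with `β` in such a way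
that every `β`-orbit contains at most one bad commuting point of `α` and `β`. -/
theorem stmt12 (n k : ℕ) (hk : 1 ≤ k) (β : Equiv.Perm (Fin n)) :
    ¬ ∃ α : Equiv.Perm (Fin n), ham (α * β) (β * α) = k ∧
      ∀ a : Fin n, (Finset.univ.filter fun x : Fin n =>
        β.SameCycle a x ∧ (α * β) x ≠ (β * α) x).card ≤ 1 := by
  rintro ⟨α, hH, hc⟩
  have hu : ∀ a b, β.SameCycle a b → α (β a) ≠ β (α a) → α (β b) ≠ β (α b) → a = b := by
    intro a b hab ha hb
    have h1 := Finset.card_le_one.1 (hc a)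
    exact h1 a (Finset.mem_filter.2 ⟨Finset.mem_univ _, Equiv.Perm.SameCycle.refl _ _, ha⟩) b (Finset.mem_filter.2 ⟨Finset.mem_univ _, hab, hb⟩)
  have hm := aux_main α β hu
  unfold ham at hH
  obtain ⟨b, hb⟩ := Finset.card_pos.1 (show 0 < _ from by rw [hH]; exact hk)
  replace hb : α (β b) ≠ β (α b) := (Finset.mem_filter.1 hb).2
  have hlt : ∑ x, Function.minimalPeriod β x < ∑ x, Function.minimalPeriod β (α x) :=
    Finset.sum_lt_sum (fun x _ => (hm x).1) ⟨b, Finset.mem_univ _, (hm b).2 hb⟩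
  rw [Equiv.sum_comp α (fun x => Function.minimalPeriod β x)] at hlt
  exact lt_irrefl _ hlt
end

section
/- Let n ≥ 2 and let β be an n-cycle in S_n (a single cycle whose support is all of {1,…,n}). Then for every integer k with 1 ≤ k ≤ n, the number T(k,n) of permutations α in S_n with H(αβ,βα) = k equals n · binom(n,k) · f(k). -/
/-- `f k` is the number of `k`-cycles `σ` of `ℤ/kℤ` with `σ i ≠ i + 1` for all `i`
(OEIS A000757). -/
noncomputable def f (k : ℕ) : ℕ :=
  Nat.card {σ : Equiv.Perm (ZMod k) // σ.IsCycle ∧ (∀ x, σ x ≠ x) ∧ ∀ i, σ i ≠ i + 1}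


open Equiv Equiv.Perm

namespace KC

lemma pinv1 {X : Type*} (g : Perm X) (x : X) : g (g⁻¹ x) = x := g.apply_symm_apply x

lemma pinv2 {X : Type*} (g : Perm X) (x : X) : g⁻¹ (g x) = x := g.symm_apply_apply x

/-- Transitivity of the cyclic group generated by a permutation. -/
def Tr {X : Type*} (g : Perm X) : Prop := ∀ x y, SameCycle g x y

lemma tr_isCycle {X : Type*} [Nontrivial X] {g : Perm X} (h : Tr g) : g.IsCycle ∧ ∀ x, g x ≠ x := by
  have h2 : ∀ x, g x ≠ x := by
    intro x hx
    obtain ⟨y, hy⟩ := exists_ne x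
    obtain ⟨i, hi⟩ := h x y
    rw [zpow_apply_eq_self_of_apply_eq_self hx] at hi
    exact hy hi.symm
  obtain ⟨x, -⟩ := exists_pair_ne X
  exact ⟨⟨x, h2 x, fun y _ => h x y⟩, h2⟩

lemma isCycle_tr {X : Type*} {g : Perm X} (h : g.IsCycle) (h2 : ∀ x, g x ≠ x) : Tr g :=
  fun x y => h.sameCycle (h2 x) (h2 y)

lemma tr_conj {X Y : Type*} (e : X ≃ Y) (g : Perm X) : Tr (e.permCongr g) ↔ Tr g := by
  have key : ∀ (i : ℤ), (e.permCongr g) ^ i = e.permCongr (g ^ i) := by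
    intro i
    exact (map_zpow (e.permCongrHom) g i).symm
  constructor
  · intro h x y
    obtain ⟨i, hi⟩ := h (e x) (e y)
    refine ⟨i, ?_⟩
    rw [key] at hi
    simpa using hi
  · intro h x y
    obtain ⟨i, hi⟩ := h (e.symm x) (e.symm y)
    refine ⟨i, ?_⟩
    rw [key]
    simp [hi]

/-- Two transitive permutations on finite types of the same size are conjugate. -/
lemma exists_conj {X Y : Type*} [Finite X] [Finite Y] (e : X ≃ Y) {g : Perm X} {h : Perm Y}
    (hg : Tr g) (hh : Tr h) : ∃ e' : X ≃ Y, e'.permCongr g = h := by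
  classical
  have := Fintype.ofFinite X
  have := Fintype.ofFinite Y
  rcases subsingleton_or_nontrivial Y with hs | hs
  · exact ⟨e, Subsingleton.elim _ _⟩
  · have h1 := tr_isCycle ((tr_conj e g).2 hg)
    have h2 := tr_isCycle hh
    have h3 : IsConj (e.permCongr g) h := by
      apply h1.1.isConj h2.1
      have a1 : (e.permCongr g).support = Finset.univ := by
        ext x; simpa using h1.2 x
      have a2 : h.support = Finset.univ := by
        ext x; simpa using h2.2 x
      rw [a1, a2]
    obtain ⟨c, hc⟩ := isConj_iff.1 h3
    refine ⟨e.trans c, ?_⟩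
    rw [← hc]
    ext x
    simp

lemma tr_add_one (k : ℕ) [NeZero k] : Tr (Equiv.addRight (1 : ZMod k)) := by
  intro x y
  obtain ⟨m, hm⟩ := ZMod.natCast_zmod_surjective (y - x)
  have key : ∀ m : ℕ, ((Equiv.addRight (1 : ZMod k)) ^ m) x = x + m := by
    intro m
    induction m with
    | zero => simp
    | succ m ih =>
      rw [pow_succ', Perm.mul_apply, ih]
      simp [add_assoc]
  refine ⟨m, ?_⟩
  rw [zpow_natCast, key, hm]
  ring

lemma count_univ {X : Type*} [Finite X] (k : ℕ) (hk : 1 ≤ k) (e : X ≃ ZMod k) (b : Perm X)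
    (hb : Tr b) :
    Nat.card {s : Perm X // Tr s ∧ ∀ x, s x ≠ b x} = f k := by
  have : NeZero k := ⟨by omega⟩
  obtain ⟨e', he'⟩ := exists_conj e hb (tr_add_one k)
  unfold f
  refine Nat.card_congr (Equiv.subtypeEquiv e'.permCongr ?_)
  intro s
  have h1 : (∀ x, s x ≠ b x) ↔ ∀ i, e'.permCongr s i ≠ i + 1 := by
    have : ∀ i, i + 1 = e'.permCongr b i := by intro i; rw [he']; rfl
    simp only [this, Equiv.permCongr_apply, ne_eq, e'.injective.eq_iff]
    exact e'.symm.surjective.forall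
  rw [← tr_conj e', h1, ← and_assoc]
  refine and_congr_left fun hne => ?_
  constructor
  · intro ht
    rcases subsingleton_or_nontrivial (ZMod k) with hs | hs
    · exact (hne 0 (Subsingleton.elim _ _)).elim
    · exact tr_isCycle ht
  · exact fun h => isCycle_tr h.1 h.2

/-- First point of `S` on the forward orbit. -/
lemma exists_retr {X : Type*} [Finite X] {b : Perm X} (hb : Tr b) (S : Set X) (hS : S.Nonempty) :
    ∃ r : X → S, (∀ s : S, r s = s) ∧ (∀ x, x ∉ S → r (b x) = r x) ∧
      ∀ g : Perm X, (∀ x, x ∉ S → g x = b x) → ∀ x, SameCycle g x (r x) := by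
  classical
  have hex : ∀ x, ∃ m : ℕ, (b ^ m) x ∈ S := by
    intro x
    obtain ⟨s, hs⟩ := hS
    obtain ⟨m, -, hm⟩ := (hb x s).exists_pow_eq' 
    exact ⟨m, hm ▸ hs⟩
  refine ⟨fun x => ⟨(b ^ (Nat.find (hex x))) x, Nat.find_spec (hex x)⟩, ?_, ?_, ?_⟩
  · intro s
    have : Nat.find (hex s) = 0 := by
      rw [Nat.find_eq_zero]; simp
    ext
    simp [this]
  · intro x hx
    have : Nat.find (hex x) = Nat.find (hex (b x)) + 1 := by
      apply Nat.find_comp_succ (hex x) (hex (b x))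
      simpa using hx
    ext
    simp only [this, pow_succ, Perm.mul_apply]
  · intro g hg x
    have : ∀ m, m ≤ Nat.find (hex x) → SameCycle g x ((b ^ m) x) := by
      intro m
      induction m with
      | zero => intro _; exact SameCycle.refl _ _
      | succ m ih =>
        intro hm
        have h1 := ih (by omega)
        have h2 := Nat.find_min (hex x) (m := m) (by omega)
        rw [pow_succ', Perm.mul_apply, ← hg _ h2]
        exact sameCycle_apply_right.2 h1
    exact this _ le_rfl

lemma count_S {X : Type*} [Fintype X] [DecidableEq X] {b : Perm X} (hb : Tr b) (S : Finset X)
    (k : ℕ) (hk : 1 ≤ k) (hS : S.card = k) :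
    Nat.card {g : Perm X // Tr g ∧ (Finset.univ.filter fun x => g x ≠ b x) = S} = f k := by
  have : NeZero k := ⟨by omega⟩
  have hne : S.Nonempty := Finset.card_pos.1 (by omega)
  obtain ⟨r, hr1, hr2, hr3⟩ := exists_retr hb (S : Set X) hne
  have hsurj : Function.Surjective (fun s : (S : Set X) => r (b s)) := by
    intro t
    have hex : ∃ m : ℕ, (b⁻¹ ^ (m + 1)) t ∈ S := by
      refine ⟨orderOf b⁻¹ - 1, ?_⟩
      rw [Nat.sub_add_cancel (orderOf_pos _), pow_orderOf_eq_one]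
      exact t.2
    refine ⟨⟨_, Nat.find_spec hex⟩, ?_⟩
    have : ∀ m, m ≤ Nat.find hex → r ((b⁻¹ ^ m) t) = t := by
      intro m
      induction m with
      | zero => intro _; simpa using hr1 t
      | succ m ih =>
        intro hm
        have h2 := Nat.find_min hex (m := m) (by omega)
        rw [← hr2 _ (by simpa using h2), pow_succ', Perm.mul_apply, pinv1]
        exact ih (by omega)
    have h3 := this _ le_rfl
    have h4 : b ((b⁻¹ ^ (Nat.find hex + 1)) t) = (b⁻¹ ^ Nat.find hex) t := by
      rw [pow_succ', Perm.mul_apply, pinv1]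
    exact (congrArg r h4).trans h3
  let c : Perm (S : Set X) := Equiv.ofBijective _ (Finite.injective_iff_bijective.1
    (Finite.injective_iff_surjective.2 hsurj))
  have hc : ∀ s : (S : Set X), c s = r (b s) := fun s => rfl
  have main : ∀ (g : Perm X) (s : Perm (S : Set X)), (∀ x, x ∉ S → g x = b x) →
      (∀ x : (S : Set X), s x = r (g x)) → (Tr g ↔ Tr s) := by
    intro g s h1 h2
    constructor
    · intro hg
      have step : ∀ x, SameCycle s (r x) (r (g x)) := by
        intro x
        by_cases hx : x ∈ S
        · have := h2 ⟨x, hx⟩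
          have e1 := hr1 ⟨x, hx⟩
          simp only at this e1
          rw [e1, ← this]
          exact sameCycle_apply_right.2 (SameCycle.refl _ _)
        · rw [h1 x hx, hr2 x hx]
      have steps : ∀ (m : ℕ) x, SameCycle s (r x) (r ((g ^ m) x)) := by
        intro m x
        induction m with
        | zero => exact SameCycle.refl _ _
        | succ m ih =>
          rw [pow_succ', Perm.mul_apply]
          exact ih.trans (step _)
      intro x y
      obtain ⟨m, -, hm⟩ := (hg x y).exists_pow_eq'
      have := steps m x
      rwa [hm, hr1, hr1] at this
    · intro hs
      have hgr := hr3 g h1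
      have step : ∀ x : (S : Set X), SameCycle g x (s x) := by
        intro x
        rw [h2]
        exact (sameCycle_apply_right.2 (SameCycle.refl _ _)).trans (hgr _)
      have steps : ∀ (m : ℕ) (x : (S : Set X)), SameCycle g x ((s ^ m) x : (S : Set X)) := by
        intro m x
        induction m with
        | zero => exact SameCycle.refl _ _
        | succ m ih =>
          rw [pow_succ', Perm.mul_apply]
          exact ih.trans (step _)
      intro x y
      obtain ⟨m, -, hm⟩ := (hs (r x) (r y)).exists_pow_eq'
      have := steps m (r x)
      rw [hm] at this
      exact (hgr x).trans (this.trans (hgr y).symm)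
  have hcT : Tr c := (main b c (fun _ _ => rfl) hc).1 hb
  have e : (S : Set X) ≃ ZMod k := by
    apply Fintype.equivOfCardEq
    rw [ZMod.card]
    simpa using hS
  rw [← count_univ k hk e c hcT]
  symm
  let lift : Perm (S : Set X) → Perm X := fun s => b * ofSubtype (c⁻¹ * s)
  have lift_not : ∀ s x, x ∉ S → lift s x = b x := by
    intro s x hx
    simp only [lift, Perm.mul_apply]
    rw [ofSubtype_apply_of_not_mem _ (by simpa using hx)]
  have lift_mem : ∀ s (x : (S : Set X)), lift s x = b ((c⁻¹ * s) x : (S : Set X)) := by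
    intro s x
    simp only [lift, Perm.mul_apply]
    rw [ofSubtype_apply_coe]
    rfl
  have lift_r : ∀ s (x : (S : Set X)), s x = r (lift s x) := by
    intro s x
    rw [lift_mem, ← hc]
    simp
  have lift_ne : ∀ s (x : (S : Set X)), lift s x ≠ b x ↔ s x ≠ c x := by
    intro s x
    rw [lift_mem, ne_eq, b.injective.eq_iff, Subtype.coe_inj, Perm.mul_apply, Perm.inv_eq_iff_eq]
  refine Nat.card_congr (Equiv.ofBijective (fun s => ⟨lift s.1, ?_, ?_⟩) ⟨?_, ?_⟩)
  · exact (main _ s.1 (lift_not _) (lift_r _)).2 s.2.1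
  · ext x
    simp only [Finset.mem_filter, Finset.mem_univ, true_and]
    by_cases hx : x ∈ S
    · simp only [hx, iff_true]
      exact (lift_ne s.1 ⟨x, hx⟩).2 (s.2.2 _)
    · simp [hx, lift_not s.1 x hx]
  · intro s t hst
    have h : lift s.1 = lift t.1 := congrArg Subtype.val hst
    have := ofSubtype_injective (mul_left_cancel h)
    exact Subtype.ext (mul_left_cancel this)
  · rintro ⟨g, hg, hgS⟩
    have hgS' : ∀ x, g x ≠ b x ↔ x ∈ S := by
      intro x; rw [← hgS]; simp
    have h1 : ∀ x, (b⁻¹ * g) x ≠ x → x ∈ (S : Set X) := by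
      intro x hx
      apply (hgS' x).1
      intro h; apply hx; simp [h]
    have h2 : ∀ x, (b⁻¹ * g) x ∈ (S : Set X) ↔ x ∈ (S : Set X) := by
      intro x
      by_cases hx : (b⁻¹ * g) x = x
      · rw [hx]
      · exact iff_of_true (h1 _ fun h => hx ((b⁻¹ * g).injective h)) (h1 x hx)
    let s : Perm (S : Set X) := c * (b⁻¹ * g).subtypePerm h2
    have hl : lift s = g := by
      simp only [lift, s, inv_mul_cancel_left]
      rw [ofSubtype_subtypePerm h2 h1, mul_inv_cancel_left]
    refine ⟨⟨s, ?_, ?_⟩, Subtype.ext hl⟩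
    · have := main _ s (lift_not _) (lift_r _)
      rw [hl] at this
      exact this.1 hg
    · intro x
      rw [← lift_ne, hl]
      exact (hgS' _).2 x.2

lemma count_conj {X : Type*} [Finite X] (x0 : X) {b : Perm X} (hb : Tr b) (P : Perm X → Prop) :
    Nat.card {a : Perm X // P (a * b * a⁻¹)} = Nat.card {g : Perm X // Tr g ∧ P g} * Nat.card X := by
  rw [← Nat.card_prod]
  have hT : ∀ a : Perm X, Tr (a * b * a⁻¹) := fun a => (tr_conj a b).2 hb
  refine Nat.card_congr (Equiv.ofBijective
    (fun a => (⟨a.1 * b * a.1⁻¹, hT a.1, a.2⟩, a.1 x0)) ⟨?_, ?_⟩)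
  · rintro ⟨a, ha⟩ ⟨a', ha'⟩ h
    simp only [Prod.mk.injEq, Subtype.mk.injEq] at h
    obtain ⟨h1, h2⟩ := h
    have h3 : ∀ i : ℤ, a * b ^ i * a⁻¹ = a' * b ^ i * a'⁻¹ := by
      intro i
      rw [← conj_zpow, ← conj_zpow, h1]
    apply Subtype.ext
    ext y
    obtain ⟨i, rfl⟩ := hb x0 y
    have := congrArg (fun p : Perm X => p (a x0)) (h3 i)
    simp only [Perm.mul_apply, pinv2] at this
    rw [this, h2]
    simp
  · rintro ⟨⟨g, hg, hP⟩, y⟩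
    obtain ⟨a, ha⟩ := exists_conj (Equiv.refl X) hb hg
    have ha : (a : Perm X) * b * (a : Perm X)⁻¹ = g := ha
    obtain ⟨i, hi⟩ := hg (a x0) y
    have hq : (g ^ i * a) * b * (g ^ i * a)⁻¹ = g := by
      have : (g ^ i * a) * b * (g ^ i * a)⁻¹ = g ^ i * (a * b * a⁻¹) * (g ^ i)⁻¹ := by group
      rw [this, ha]
      group
    refine ⟨⟨g ^ i * a, by rw [hq]; exact hP⟩, ?_⟩
    simp only [Prod.mk.injEq, Subtype.mk.injEq]
    exact ⟨hq, hi⟩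

end KC

theorem stmt14 (n : ℕ) (hn : 2 ≤ n) (β : Equiv.Perm (Fin n))
    (hβ : β.IsCycle ∧ β.support = Finset.univ)
    (k : ℕ) (hk1 : 1 ≤ k) (hkn : k ≤ n) :
    kcomm k β = n * Nat.choose n k * f k := by
  classical
  have hb : KC.Tr β := KC.isCycle_tr hβ.1 (fun x => by
    rw [← Equiv.Perm.mem_support, hβ.2]; simp)
  have hham : ∀ α : Equiv.Perm (Fin n), ham (α * β) (β * α) =
      (Finset.univ.filter fun x => (α * β * α⁻¹) x ≠ β x).card := by
    intro α
    unfold ham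
    refine Finset.card_bij (fun a _ => α a) ?_ ?_ ?_
    · intro a ha
      rw [Finset.mem_filter] at ha ⊢
      simpa using ha
    · intro a _ b _ h; exact α.injective h
    · intro b hb
      refine ⟨α⁻¹ b, ?_, by simp⟩
      rw [Finset.mem_filter] at hb ⊢
      simpa using hb
  unfold kcomm
  simp only [hham]
  rw [KC.count_conj (⟨0, by omega⟩ : Fin n) hb
    (fun g => (Finset.univ.filter fun x => g x ≠ β x).card = k)]
  have h2 : Nat.card {g : Equiv.Perm (Fin n) //
      KC.Tr g ∧ (Finset.univ.filter fun x => g x ≠ β x).card = k} = n.choose k * f k := by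
    rw [Nat.card_eq_fintype_card, Fintype.card_subtype,
      Finset.card_eq_sum_card_fiberwise (t := Finset.powersetCard k Finset.univ)
        (f := fun g : Equiv.Perm (Fin n) => Finset.univ.filter fun x => g x ≠ β x)]
    · rw [Finset.sum_congr rfl (g := fun _ => f k)]
      · simp
      · intro S hS
        have hS' := (Finset.mem_powersetCard.1 hS).2
        rw [← KC.count_S hb S k hk1 hS', Nat.card_eq_fintype_card, Fintype.card_subtype,
          Finset.filter_filter]
        congr 1
        ext g
        simp only [Finset.mem_filter, Finset.mem_univ, true_and]
        constructor
        · rintro ⟨⟨h, -⟩, h'⟩; exact ⟨h, h'⟩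
        · rintro ⟨h, h'⟩; exact ⟨⟨h, by rw [h']; exact hS'⟩, h'⟩
    · intro g hg
      simp only [Finset.coe_filter, Finset.mem_univ, true_and, Set.mem_ofPred_eq] at hg
      simp [Finset.mem_powersetCard, hg.2]
  rw [h2, Nat.card_eq_fintype_card, Fintype.card_fin]
  ring
end

section
/- Let m be a fixed nonnegative integer. Then the limit as n → ∞ of n·binom(n, n−m)·f(n−m)/n! equals e^{−1}/m!; that is, the proportion T(n−m,n)/n! of permutations that (n−m)-commute with an n-cycle tends to e^{−1}/m!, where T(k,n) = n·binom(n,k)·f(k). -/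
open Filter

/-- `T k n = n * C(n, k) * f(k)` is the number of permutations that `k`-commute
with an `n`-cycle. -/
noncomputable def T (k n : ℕ) : ℕ := n * Nat.choose n k * f k

/-- `σ` is a cyclic permutation of `U`, fixing everything else. -/
def Cyc {α : Type*} (U : Finset α) (σ : Equiv.Perm α) : Prop :=
  (∀ x, x ∉ U → σ x = x) ∧ ∀ x ∈ U, ∀ y ∈ U, σ.SameCycle x y

lemma cyc_contract {α : Type*} [Finite α] [DecidableEq α] {U : Finset α} {a b : α}
    (ha : a ∈ U) (hb : b ∈ U) (hab : a ≠ b) {σ : Equiv.Perm α} (h : Cyc U σ) (hs : σ a = b) :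
    Cyc (U.erase b) (σ * Equiv.swap a b) := by
  set τ := σ * Equiv.swap a b with hτ
  have τa : τ a = σ b := by simp [hτ]
  have τb : τ b = b := by simp [hτ, hs]
  have τx : ∀ x, x ≠ a → x ≠ b → τ x = σ x := by
    intro x h1 h2
    simp [hτ, Equiv.swap_apply_of_ne_of_ne h1 h2]
  have key : ∀ n : ℕ, (σ ^ n) a = b ∨ τ.SameCycle a ((σ ^ n) a) := by
    intro n
    induction n with
    | zero => right; exact Equiv.Perm.SameCycle.refl _ _
    | succ n ih =>
      rw [pow_succ', Equiv.Perm.mul_apply]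
      set y := (σ ^ n) a
      by_cases hy : y = b
      · right
        rw [hy, ← τa]
        exact Equiv.Perm.sameCycle_apply_right.2 (Equiv.Perm.SameCycle.refl _ _)
      · by_cases hya : y = a
        · left; rw [hya, hs]
        · right
          rw [← τx y hya hy]
          exact Equiv.Perm.sameCycle_apply_right.2 (ih.resolve_left hy)
  have key2 : ∀ x ∈ U.erase b, τ.SameCycle a x := by
    intro x hx
    rw [Finset.mem_erase] at hx
    obtain ⟨n, hn⟩ := (h.2 a ha x hx.2).exists_nat_pow_eq
    have := key n
    rw [hn] at this
    exact this.resolve_left hx.1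
  refine ⟨?_, fun x hx y hy => (key2 x hx).symm.trans (key2 y hy)⟩
  intro x hx
  by_cases hxb : x = b
  · rw [hxb, τb]
  · have hxU : x ∉ U := fun h' => hx (Finset.mem_erase.2 ⟨hxb, h'⟩)
    rw [τx x (fun h' => hxU (h' ▸ ha)) hxb, h.1 x hxU]

lemma cyc_expand {α : Type*} [Finite α] [DecidableEq α] {U : Finset α} {a b : α}
    (ha : a ∈ U) (hb : b ∈ U) (hab : a ≠ b) {τ : Equiv.Perm α} (h : Cyc (U.erase b) τ) :
    Cyc U (τ * Equiv.swap a b) ∧ (τ * Equiv.swap a b) a = b := by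
  set σ := τ * Equiv.swap a b with hσ
  have τb : τ b = b := h.1 b (by simp)
  have σa : σ a = b := by simp [hσ, τb]
  have σb : σ b = τ a := by simp [hσ]
  have σx : ∀ x, x ≠ a → x ≠ b → σ x = τ x := by
    intro x h1 h2
    simp [hσ, Equiv.swap_apply_of_ne_of_ne h1 h2]
  have key : ∀ n : ℕ, σ.SameCycle a ((τ ^ n) a) := by
    intro n
    induction n with
    | zero => exact Equiv.Perm.SameCycle.refl _ _
    | succ n ih =>
      rw [pow_succ', Equiv.Perm.mul_apply]
      set y := (τ ^ n) a
      by_cases hy : y = b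
      · rw [hy, τb, ← hy]; exact ih
      · by_cases hya : y = a
        · rw [hya, ← σb, ← σa]
          exact Equiv.Perm.sameCycle_apply_right.2
            (Equiv.Perm.sameCycle_apply_right.2 (Equiv.Perm.SameCycle.refl _ _))
        · rw [← σx y hya hy]
          exact Equiv.Perm.sameCycle_apply_right.2 ih
  have key2 : ∀ x ∈ U, σ.SameCycle a x := by
    intro x hx
    by_cases hxb : x = b
    · rw [hxb, ← σa]
      exact Equiv.Perm.sameCycle_apply_right.2 (Equiv.Perm.SameCycle.refl _ _)
    obtain ⟨n, hn⟩ := (h.2 a (Finset.mem_erase.2 ⟨hab, ha⟩) x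
      (Finset.mem_erase.2 ⟨hxb, hx⟩)).exists_nat_pow_eq
    rw [← hn]
    exact key n
  refine ⟨⟨?_, fun x hx y hy => (key2 x hx).symm.trans (key2 y hy)⟩, σa⟩
  intro x hx
  rw [σx x (fun h' => hx (h' ▸ ha)) (fun h' => hx (h' ▸ hb)), h.1 x]
  exact fun h' => hx (Finset.mem_of_mem_erase h')

open Classical in
lemma card_contract {α : Type*} [Fintype α] {U : Finset α} {a b : α}
    (ha : a ∈ U) (hb : b ∈ U) (hab : a ≠ b) (P Q : Equiv.Perm α → Prop)
    (hPQ : ∀ σ, P (σ * Equiv.swap a b) ↔ Q σ) :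
    (Finset.univ.filter (fun σ : Equiv.Perm α => Cyc U σ ∧ σ a = b ∧ Q σ)).card =
    (Finset.univ.filter (fun σ : Equiv.Perm α => Cyc (U.erase b) σ ∧ P σ)).card := by
  refine Finset.card_bij' (fun σ _ => σ * Equiv.swap a b) (fun σ _ => σ * Equiv.swap a b)
    ?_ ?_ ?_ ?_
  · intro σ hσ
    simp only [Finset.mem_filter, Finset.mem_univ, true_and] at hσ ⊢
    exact ⟨cyc_contract ha hb hab hσ.1 hσ.2.1, (hPQ σ).2 hσ.2.2⟩
  · intro σ hσ
    simp only [Finset.mem_filter, Finset.mem_univ, true_and] at hσ ⊢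
    obtain ⟨h1, h2⟩ := cyc_expand ha hb hab hσ.1
    refine ⟨h1, h2, (hPQ _).1 ?_⟩
    rw [mul_assoc, Equiv.swap_mul_self, mul_one]
    exact hσ.2
  · intro σ _
    simp [mul_assoc]
  · intro σ _
    simp [mul_assoc]

open Classical in
lemma card_cyc {α : Type*} [Fintype α] (n : ℕ) : ∀ U : Finset α, U.card = n + 1 →
    (Finset.univ.filter (fun σ : Equiv.Perm α => Cyc U σ)).card = n.factorial := by
  induction n with
  | zero =>
    intro U hU
    obtain ⟨a, rfl⟩ := Finset.card_eq_one.1 hU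
    rw [Nat.factorial_zero, Finset.card_eq_one]
    refine ⟨1, ?_⟩
    ext σ
    simp only [Finset.mem_filter, Finset.mem_univ, true_and, Finset.mem_singleton]
    constructor
    · rintro ⟨h, -⟩
      have h' : ∀ x, x ≠ a → σ x = x := fun x hx => h x (by simpa using hx)
      ext x
      by_cases hx : x = a
      · subst hx
        by_contra hne
        exact hne (σ.injective (h' _ hne))
      · exact h' x hx
    · rintro rfl
      refine ⟨fun x _ => rfl, ?_⟩
      intro x hx y hy
      rw [Finset.mem_singleton] at hx hy
      subst hx; subst hy
      exact Equiv.Perm.SameCycle.refl _ _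
  | succ n ih =>
    intro U hU
    obtain ⟨a, ha⟩ : U.Nonempty := Finset.card_pos.1 (by omega)
    have hmap : ∀ σ ∈ Finset.univ.filter (fun σ : Equiv.Perm α => Cyc U σ),
        σ a ∈ U.erase a := by
      intro σ hσ
      simp only [Finset.mem_filter, Finset.mem_univ, true_and] at hσ
      rw [Finset.mem_erase]
      constructor
      · intro hfix
        have : ∀ x ∈ U, x = a := fun x hx =>
          ((hσ.2 a ha x hx).eq_of_left hfix).symm
        have : U.card ≤ 1 := Finset.card_le_one.2 fun x hx y hy =>
          (this x hx).trans (this y hy).symm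
        omega
      · by_contra hna
        have := hσ.1 _ hna
        exact hna (by rwa [σ.injective this])
    rw [Finset.card_eq_sum_card_fiberwise hmap]
    rw [Finset.sum_congr rfl (g := fun _ => n.factorial)]
    · rw [Finset.sum_const, Finset.card_erase_of_mem ha, hU, smul_eq_mul, Nat.factorial_succ]
      rfl
    · intro b hb
      rw [Finset.mem_erase] at hb
      rw [← ih (U.erase b) (by rw [Finset.card_erase_of_mem hb.2, hU]; rfl)]
      have := card_contract ha hb.2 hb.1.symm (fun _ => True) (fun _ => True) (fun _ => Iff.rfl)
      simp only [and_true] at this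
      rw [← this, Finset.filter_filter]

open Classical in
lemma card_agree {α : Type*} [Fintype α] (s : ℕ) : ∀ (n : ℕ) (U S : Finset α) (c : Equiv.Perm α),
    Cyc U c → S ⊆ U → S.card = s → U.card = n + s + 1 →
    (Finset.univ.filter (fun σ : Equiv.Perm α => Cyc U σ ∧ ∀ x ∈ S, σ x = c x)).card
      = n.factorial := by
  induction s with
  | zero =>
    intro n U S c hc hSU hS hU
    rw [Finset.card_eq_zero] at hS
    subst hS
    simpa using card_cyc n U hU
  | succ s ih =>
    intro n U S c hc hSU hS hU
    obtain ⟨a, haS, hcS⟩ : ∃ a ∈ S, c a ∉ S := by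
      by_contra! hcon
      obtain ⟨a, ha⟩ : S.Nonempty := Finset.card_pos.1 (by omega)
      have hp : ∀ m : ℕ, (c ^ m) a ∈ S := by
        intro m
        induction m with
        | zero => simpa using ha
        | succ m ihm =>
          rw [pow_succ', Equiv.Perm.mul_apply]
          exact hcon _ ihm
      have : U ⊆ S := by
        intro x hx
        obtain ⟨m, hm⟩ := (hc.2 a (hSU ha) x hx).exists_nat_pow_eq
        rw [← hm]; exact hp m
      have := Finset.card_le_card this
      omega
    have haU := hSU haS
    have hab : a ≠ c a := fun h => hcS (h ▸ haS)
    have hbU : c a ∈ U := by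
      by_contra hna
      have := hc.1 _ hna
      exact hna (by rwa [c.injective this])
    rw [← ih n (U.erase (c a)) (S.erase a) (c * Equiv.swap a (c a))
      (cyc_contract haU hbU hab hc rfl) ?_ ?_ ?_]
    · refine Eq.trans ?_ ((card_contract haU hbU hab
        (fun σ => ∀ x ∈ S.erase a, σ x = (c * Equiv.swap a (c a)) x)
        (fun σ => ∀ x ∈ S.erase a, σ x = c x) ?_).trans ?_)
      · congr 1
        ext σ
        simp only [Finset.mem_filter, Finset.mem_univ, true_and, Finset.mem_erase]
        constructor
        · rintro ⟨h1, h2⟩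
          exact ⟨h1, h2 a haS, fun x hx => h2 x hx.2⟩
        · rintro ⟨h1, h2, h3⟩
          refine ⟨h1, fun x hx => ?_⟩
          by_cases hxa : x = a
          · rw [hxa, h2]
          · exact h3 x ⟨hxa, hx⟩
      · intro σ
        refine forall₂_congr fun x hx => ?_
        rw [Finset.mem_erase] at hx
        have hxb : x ≠ c a := fun h => hcS (h ▸ hx.2)
        simp [Equiv.swap_apply_of_ne_of_ne hx.1 hxb]
      · congr!
    · intro x hx
      rw [Finset.mem_erase] at hx ⊢
      exact ⟨fun h => hcS (h ▸ hx.2), hSU hx.2⟩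
    · rw [Finset.card_erase_of_mem haS, hS]; rfl
    · rw [Finset.card_erase_of_mem hbU, hU]; omega

open Classical in
/-- Abstract inclusion-exclusion count. -/
lemma incl_excl {α : Type*} [Fintype α] (s : Finset (Equiv.Perm α))
    (c : Equiv.Perm α) :
    ((s.filter (fun σ => ∀ x, σ x ≠ c x)).card : ℝ) =
      ∑ S : Finset α, (-1 : ℝ) ^ S.card * (s.filter (fun σ => ∀ x ∈ S, σ x = c x)).card := by
  have h1 : ∀ σ : Equiv.Perm α, (if ∀ x, σ x ≠ c x then (1:ℝ) else 0) =
      ∑ S : Finset α, (-1 : ℝ) ^ S.card * (if ∀ x ∈ S, σ x = c x then (1:ℝ) else 0) := by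
    intro σ
    have : (if ∀ x, σ x ≠ c x then (1:ℝ) else 0) =
        ∏ x : α, (1 + (-1) * (if σ x = c x then (1:ℝ) else 0)) := by
      split_ifs with h
      · rw [Finset.prod_eq_one]
        intro x _
        simp [h x]
      · push Not at h
        obtain ⟨x, hx⟩ := h
        rw [Finset.prod_eq_zero (Finset.mem_univ x)]
        simp [hx]
    rw [this, Finset.prod_one_add, Finset.powerset_univ]
    refine Finset.sum_congr rfl fun S _ => ?_
    rw [Finset.prod_mul_distrib, Finset.prod_const]
    congr 1
    split_ifs with h
    · exact Finset.prod_eq_one fun x hx => by simp [h x hx]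
    · push Not at h
      obtain ⟨x, hx, hx'⟩ := h
      exact Finset.prod_eq_zero hx (by simp [hx'])
  rw [Finset.card_filter]
  push_cast
  rw [Finset.sum_congr rfl fun σ _ => h1 σ, Finset.sum_comm]
  refine Finset.sum_congr rfl fun S _ => ?_
  rw [← Finset.mul_sum, Finset.card_filter]
  push_cast
  rfl

lemma cyc_univ_iff (k : ℕ) (σ : Equiv.Perm (ZMod (k + 2))) :
    Cyc Finset.univ σ ↔ σ.IsCycle ∧ ∀ x, σ x ≠ x := by
  constructor
  · rintro ⟨-, h⟩
    have hne : ∀ x, σ x ≠ x := by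
      intro x hx
      have : Fact (1 < k + 2) := ⟨by omega⟩
      obtain ⟨y, hy⟩ := exists_ne x
      exact hy ((h x (Finset.mem_univ _) y (Finset.mem_univ _)).eq_of_left hx).symm
    exact ⟨⟨0, hne 0, fun y _ => h _ (Finset.mem_univ _) _ (Finset.mem_univ _)⟩, hne⟩
  · rintro ⟨h, hne⟩
    exact ⟨fun x hx => absurd (Finset.mem_univ x) hx, fun x _ y _ => h.sameCycle (hne x) (hne y)⟩

lemma cyc_shift (k : ℕ) : Cyc Finset.univ (Equiv.addRight (1 : ZMod (k + 2))) := by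
  refine ⟨fun x hx => absurd (Finset.mem_univ x) hx, fun x _ y _ => ⟨((y - x).val : ℤ), ?_⟩⟩
  have : ∀ n : ℕ, ((Equiv.addRight (1 : ZMod (k + 2))) ^ n) x = x + n := by
    intro n
    induction n with
    | zero => simp
    | succ n ih => rw [pow_succ', Equiv.Perm.mul_apply, ih]; simp [add_assoc]
  rw [zpow_natCast, this]
  simp

open Classical in
lemma count_agree {α : Type*} [Fintype α] (k : ℕ) (hk : Fintype.card α = k + 2)
    (c : Equiv.Perm α) (hc : Cyc Finset.univ c) (S : Finset α) : (-1 : ℝ) ^ S.card *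
      ((Finset.univ.filter (fun σ : Equiv.Perm α => Cyc Finset.univ σ)).filter
      (fun σ => ∀ x ∈ S, σ x = c x)).card =
      (fun j : ℕ => (-1 : ℝ) ^ j * ((k + 1 - j).factorial : ℝ)) S.card := by
  have hle := Finset.card_le_univ S
  rw [hk] at hle
  simp only
  congr 2
  rw [Finset.filter_filter]
  by_cases hS : S.card = k + 2
  · have : S = Finset.univ := Finset.eq_univ_of_card S (by rw [hk, hS])
    subst this
    rw [hS, show k + 1 - (k + 2) = 0 by omega, Nat.factorial_zero, Finset.card_eq_one]
    refine ⟨c, ?_⟩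
    ext σ
    simp only [Finset.mem_filter, Finset.mem_univ, true_and, Finset.mem_singleton,
      true_imp_iff]
    constructor
    · rintro ⟨-, h⟩
      exact Equiv.ext h
    · rintro rfl
      exact ⟨hc, fun _ => rfl⟩
  · rw [← card_agree S.card (k + 1 - S.card) Finset.univ S _ hc
      (Finset.subset_univ _) rfl (by rw [Finset.card_univ, hk]; omega)]

lemma f_formula (k : ℕ) : (f (k + 2) : ℝ) =
    (∑ j ∈ Finset.range (k + 2), (-1 : ℝ) ^ j * ((k + 2).choose j * (k + 1 - j).factorial))
      + (-1) ^ (k + 2) := by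
  classical
  have h0 : f (k + 2) = ((Finset.univ.filter (fun σ : Equiv.Perm (ZMod (k + 2)) =>
      Cyc Finset.univ σ)).filter
      (fun σ => ∀ x, σ x ≠ Equiv.addRight (1 : ZMod (k + 2)) x)).card := by
    rw [f, Nat.card_eq_fintype_card, Fintype.card_subtype, Finset.filter_filter]
    congr 1
    ext σ
    simp only [Finset.mem_filter, Finset.mem_univ, true_and, cyc_univ_iff, and_assoc,
      Equiv.coe_addRight]
  have h1 := count_agree k (by rw [ZMod.card]) _ (cyc_shift k)
  have h2 := incl_excl (Finset.univ.filter (fun σ : Equiv.Perm (ZMod (k + 2)) =>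
      Cyc Finset.univ σ)) (Equiv.addRight (1 : ZMod (k + 2)))
  have h3 := h2.trans (Finset.sum_congr rfl fun S _ => (by convert h1 S))
  rw [h0]
  refine Eq.trans (by congr!) (h3.trans ?_)
  rw [← Finset.powerset_univ,
    Finset.sum_powerset_apply_card
    (fun j : ℕ => (-1 : ℝ) ^ j * ((k + 1 - j).factorial : ℝ)), Finset.card_univ, ZMod.card, Finset.sum_range_succ]
  congr 1
  · refine Finset.sum_congr rfl fun j _ => ?_
    rw [nsmul_eq_mul]; ring
  · simp

lemma f_tendsto : Tendsto (fun k : ℕ => (f (k + 2) : ℝ) / (k + 1).factorial) atTop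
    (nhds (Real.exp (-1))) := by
  have hE : ∀ k : ℕ, (f (k + 2) : ℝ) / (k + 1).factorial =
      (∑' j : ℕ, if j < k + 2 then (-1 : ℝ) ^ j / j.factorial * ((k + 2 : ℝ) / (k + 2 - j)) else 0)
        + (-1) ^ (k + 2) / (k + 1).factorial := by
    intro k
    rw [f_formula, add_div, Finset.sum_div]
    congr 1
    rw [tsum_eq_sum (s := Finset.range (k + 2))]
    · refine Finset.sum_congr rfl fun j hj => ?_
      rw [Finset.mem_range] at hj
      rw [if_pos hj]
      obtain ⟨d, hd⟩ : ∃ d, k + 1 = j + d := ⟨k + 1 - j, by omega⟩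
      have hk : (k : ℝ) + 2 = j + d + 1 := by
        have : ((k + 1 : ℕ) : ℝ) = (j + d : ℕ) := by rw [hd]
        push_cast at this; linarith
      rw [show k + 2 = (d + 1) + j by omega, Nat.add_choose, show k + 1 - j = d by omega, hd,
        Nat.cast_div (Nat.factorial_mul_factorial_dvd_factorial_add _ _) (by positivity), hk,
        show d + 1 + j = (j + d) + 1 by omega, Nat.factorial_succ, Nat.factorial_succ]
      have : (j : ℝ) + d + 1 - j = d + 1 := by ring
      rw [this]
      push_cast
      have h1 : (d.factorial : ℝ) ≠ 0 := by positivity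
      have h2 : (j.factorial : ℝ) ≠ 0 := by positivity
      have h3 : ((j + d).factorial : ℝ) ≠ 0 := by positivity
      have h4 : (d : ℝ) + 1 ≠ 0 := by positivity
      field_simp
    · intro j hj
      rw [Finset.mem_range] at hj
      rw [if_neg hj]
  simp_rw [hE]
  rw [← add_zero (Real.exp (-1))]
  refine Tendsto.add ?_ ?_
  · have hexp : Real.exp (-1) = ∑' j : ℕ, (-1 : ℝ) ^ j / j.factorial := by
      rw [Real.exp_eq_exp_ℝ, NormedSpace.exp_eq_tsum_div]
    rw [hexp]
    have hsum : Summable (fun j : ℕ => ((j : ℝ) + 1) / j.factorial) := by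
      have h1 := Real.summable_pow_div_factorial 2
      refine Summable.of_nonneg_of_le (fun j => by positivity) (fun j => ?_) h1
      gcongr
      have := @Nat.lt_two_pow_self j
      exact_mod_cast this
    refine tendsto_tsum_of_dominated_convergence hsum ?_ ?_
    · intro j
      have h1 : Tendsto (fun k : ℕ => (-1 : ℝ) ^ j / j.factorial * ((k + 2 : ℝ) / (k + 2 - j)))
          atTop (nhds ((-1 : ℝ) ^ j / j.factorial * 1)) := by
        refine Tendsto.const_mul _ ?_
        have h2 : Tendsto (fun k : ℕ => 1 + (j : ℝ) / ((k : ℝ) + (2 - j))) atTop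
            (nhds (1 + 0)) := by
          refine Tendsto.const_add _ (Tendsto.const_div_atTop ?_ _)
          exact tendsto_atTop_add_const_right _ _ tendsto_natCast_atTop_atTop
        rw [add_zero] at h2
        refine h2.congr' ?_
        filter_upwards [eventually_ge_atTop j] with k hk
        have hk' : (j : ℝ) ≤ k := by exact_mod_cast hk
        have h3 : (k : ℝ) + 2 - j ≠ 0 := by linarith
        have h4 : (k : ℝ) + (2 - j) = k + 2 - j := by ring
        rw [h4]
        field_simp
        ring
      rw [mul_one] at h1
      refine h1.congr' ?_
      filter_upwards [eventually_ge_atTop j] with k hk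
      rw [if_pos (by omega)]
    · refine Eventually.of_forall fun k j => ?_
      split_ifs with h
      · have h1 : (j : ℝ) + 1 ≤ k + 2 := by exact_mod_cast h
        have h2 : (0 : ℝ) < k + 2 - j := by linarith
        rw [norm_mul, norm_div, norm_pow, norm_neg, norm_one, one_pow, Real.norm_of_nonneg
          (by positivity : (0:ℝ) ≤ (j.factorial : ℝ)), Real.norm_of_nonneg (by positivity),
          div_mul_eq_mul_div, one_mul]
        gcongr
        rw [div_le_iff₀ h2]
        have h3 : (0 : ℝ) ≤ j := by positivity
        nlinarith
      · rw [norm_zero]; positivity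
  · have h := (FloorSemiring.tendsto_pow_div_factorial_atTop (-1 : ℝ))
    have h' := ((tendsto_add_atTop_iff_nat 1).2 h).const_mul (-1 : ℝ)
    rw [mul_zero] at h'
    refine h'.congr fun k => ?_
    ring

theorem stmt15 (m : ℕ) :
    Tendsto (fun n : ℕ => (T (n - m) n : ℝ) / Nat.factorial n) atTop
      (nhds (Real.exp (-1) / Nat.factorial m)) := by
  rw [← tendsto_add_atTop_iff_nat (m + 2)]
  have h2 : Tendsto (fun k : ℕ => 1 + (m : ℝ) / ((k : ℝ) + 2)) atTop (nhds (1 + 0)) := by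
    refine Tendsto.const_add _ (Tendsto.const_div_atTop ?_ _)
    exact tendsto_atTop_add_const_right _ _ tendsto_natCast_atTop_atTop
  have h3 := (h2.mul f_tendsto).div_const (m.factorial : ℝ)
  rw [add_zero, one_mul] at h3
  refine h3.congr fun k => ?_
  rw [T, show k + (m + 2) - m = k + 2 by omega, show k + (m + 2) = m + (k + 2) by omega,
    Nat.cast_mul, Nat.cast_mul, Nat.add_choose,
    Nat.cast_div (Nat.factorial_mul_factorial_dvd_factorial_add _ _) (by positivity),
    show (k + 2).factorial = (k + 2) * (k + 1).factorial from Nat.factorial_succ _]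
  push_cast
  have e1 : ((k + 1).factorial : ℝ) ≠ 0 := by positivity
  have e2 : (m.factorial : ℝ) ≠ 0 := by positivity
  have e3 : ((m + (k + 2)).factorial : ℝ) ≠ 0 := by positivity
  have e4 : (k : ℝ) + 2 ≠ 0 := by positivity
  field_simp
  ring
end

section
/- Let n ≥ 2 and let β be a transposition in S_n. Then: (1) c(0,β) = 2·(n−2)!; (2) c(3,β) = 4·(n−2)·(n−2)!; (3) if n ≥ 3 then c(4,β) = (n−2)·(n−3)·(n−2)!; and (4) c(k,β) = 0 for every integer k with 5 ≤ k ≤ n. -/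
theorem fiber_card {n : ℕ} (x y p q : Fin n) (hxy : x ≠ y) (hpq : p ≠ q) :
    (Finset.univ.filter fun α : Equiv.Perm (Fin n) => α x = p ∧ α y = q).card
      = Nat.factorial (n - 2) := by
  obtain ⟨g, hg1, hg2⟩ : ∃ g : Equiv.Perm (Fin n), g x = p ∧ g y = q := by
    refine ⟨Equiv.swap (Equiv.swap x p y) q * Equiv.swap x p, ?_, ?_⟩
    · simp only [Equiv.Perm.mul_apply, Equiv.swap_apply_left]
      apply Equiv.swap_apply_of_ne_of_ne _ hpq
      intro h
      apply hxy
      apply (Equiv.swap x p).injective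
      rw [← h, Equiv.swap_apply_left]
    · simp
  have e : {α : Equiv.Perm (Fin n) // α x = p ∧ α y = q} ≃
      {α : Equiv.Perm (Fin n) // ∀ a, ¬ (a ≠ x ∧ a ≠ y) → α a = a} := by
    refine (Equiv.mulLeft g⁻¹).subtypeEquiv ?_
    intro α
    simp only [Equiv.coe_mulLeft, Equiv.Perm.mul_apply, Equiv.Perm.inv_eq_iff_eq]
    constructor
    · rintro ⟨h1, h2⟩ a ha
      by_cases h : a = x
      · subst h; rw [h1, hg1]
      · have : a = y := by tauto
        subst this; rw [h2, hg2]
    · intro h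
      exact ⟨by rw [h x (by tauto), hg1], by rw [h y (by tauto), hg2]⟩
  rw [← Fintype.card_subtype, Fintype.card_congr e,
    ← Fintype.card_congr (Equiv.Perm.subtypeEquivSubtypePerm (fun a => a ≠ x ∧ a ≠ y)),
    Fintype.card_perm]
  congr 1
  rw [Fintype.card_subtype]
  have : (Finset.univ.filter fun a : Fin n => a ≠ x ∧ a ≠ y) = ({x, y} : Finset (Fin n))ᶜ := by
    ext a; simp
  rw [this, Finset.card_compl, Finset.card_pair hxy, Fintype.card_fin]

theorem count_pairs {n : ℕ} (x y : Fin n) (hxy : x ≠ y) (P : Equiv.Perm (Fin n) → Prop)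
    [DecidablePred P] (T : Finset (Fin n × Fin n)) (hT : ∀ t ∈ T, t.1 ≠ t.2)
    (h : ∀ α, P α ↔ (α x, α y) ∈ T) :
    Nat.card {α // P α} = T.card * Nat.factorial (n - 2) := by
  rw [Nat.card_eq_fintype_card, Fintype.card_subtype,
    Finset.card_eq_sum_card_fiberwise (f := fun α : Equiv.Perm (Fin n) => (α x, α y)) (t := T)
      (by intro α hα; simpa [h] using hα)]
  rw [Finset.sum_const_nat]
  rintro ⟨p, q⟩ hpq
  rw [← fiber_card x y p q hxy (hT _ hpq)]
  congr 1
  ext α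
  simp only [Finset.mem_filter, Finset.mem_univ, true_and, h, Prod.mk.injEq]
  constructor
  · exact fun h => h.2
  · rintro ⟨rfl, rfl⟩
    exact ⟨hpq, rfl, rfl⟩

theorem ham_swap {n : ℕ} (x y : Fin n) (hxy : x ≠ y) (α : Equiv.Perm (Fin n)) :
    ham (α * Equiv.swap x y) (Equiv.swap x y * α) =
      if α x = x ∨ α x = y then (if α y = x ∨ α y = y then 0 else 3)
      else (if α y = x ∨ α y = y then 3 else 4) := by
  obtain ⟨u, hu⟩ := α.surjective x
  obtain ⟨v, hv⟩ := α.surjective y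
  have inj : ∀ a b, α a = α b → a = b := fun a b h => α.injective h
  have hne : α x ≠ α y := fun h => hxy (inj _ _ h)
  have huv : u ≠ v := by rintro rfl; exact hxy (hu.symm.trans hv)
  have hu' : ∀ a, α a = x ↔ a = u := fun a => ⟨fun h => inj _ _ (h.trans hu.symm), by rintro rfl; exact hu⟩
  have hv' : ∀ a, α a = y ↔ a = v := fun a => ⟨fun h => inj _ _ (h.trans hv.symm), by rintro rfl; exact hv⟩
  have key : ∀ a, (α (Equiv.swap x y a) ≠ Equiv.swap x y (α a)) ↔
      (if a = x ∨ a = y then ¬ ((α x = x ∨ α x = y) ∧ (α y = x ∨ α y = y)) else a = u ∨ a = v) := by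
    intro a
    simp only [Equiv.swap_apply_def]
    have i1 := inj x a
    have i2 := inj y a
    have i3 := hu' a
    have i4 := hv' a
    split_ifs <;> grind
  unfold ham
  simp only [Equiv.Perm.mul_apply, key]
  simp only [hu', hv']
  split_ifs with h1 h2 h2
  · rw [Finset.card_eq_zero]; ext a; simp; grind
  · rw [Finset.card_eq_three]
    rcases h1 with h1 | h1
    · refine ⟨x, y, v, hxy, by grind, by grind, ?_⟩
      ext a; simp; grind
    · refine ⟨x, y, u, hxy, by grind, by grind, ?_⟩
      ext a; simp; grind
  · rw [Finset.card_eq_three]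
    rcases h2 with h2 | h2
    · refine ⟨x, y, v, hxy, by grind, by grind, ?_⟩
      ext a; simp; grind
    · refine ⟨x, y, u, hxy, by grind, by grind, ?_⟩
      ext a; simp; grind
  · have : (Finset.univ.filter fun a => if a = x ∨ a = y then
        ¬ ((x = u ∨ x = v) ∧ (y = u ∨ y = v)) else a = u ∨ a = v) = {x, y, u, v} := by
      ext a; simp; grind
    rw [this, Finset.card_insert_of_notMem (by simp; grind),
      Finset.card_insert_of_notMem (by simp; grind), Finset.card_pair huv]

theorem stmt18 (n : ℕ) (hn : 2 ≤ n) (β : Equiv.Perm (Fin n)) (hβ : β.IsSwap) :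
    kcomm 0 β = 2 * Nat.factorial (n - 2) ∧
    kcomm 3 β = 4 * (n - 2) * Nat.factorial (n - 2) ∧
    (3 ≤ n → kcomm 4 β = (n - 2) * (n - 3) * Nat.factorial (n - 2)) ∧
    (∀ k, 5 ≤ k → k ≤ n → kcomm k β = 0) := by
  obtain ⟨x, y, hxy, rfl⟩ := hβ
  have hne : ∀ α : Equiv.Perm (Fin n), α x ≠ α y := fun α h => hxy (α.injective h)
  have c1 : ({x, y} : Finset (Fin n)).card = 2 := Finset.card_pair hxy
  have c2 : (({x, y} : Finset (Fin n))ᶜ).card = n - 2 := by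
    rw [Finset.card_compl, c1, Fintype.card_fin]
  unfold kcomm
  simp only [ham_swap x y hxy]
  refine ⟨?_, ?_, ?_, ?_⟩
  · rw [count_pairs x y hxy _ ({x, y} : Finset (Fin n)).offDiag]
    · rw [Finset.offDiag_card, c1]
    · intro t ht; exact (Finset.mem_offDiag.1 ht).2.2
    · intro α
      have := hne α
      simp only [Finset.mem_offDiag, Finset.mem_insert, Finset.mem_singleton]
      split_ifs <;> simp_all
  · rw [count_pairs x y hxy _ ((({x, y} : Finset (Fin n)) ×ˢ ({x, y} : Finset (Fin n))ᶜ) ∪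
      (({x, y} : Finset (Fin n))ᶜ ×ˢ ({x, y} : Finset (Fin n))))]
    · rw [Finset.card_union_of_disjoint, Finset.card_product, Finset.card_product, c1, c2]
      · ring
      · rw [Finset.disjoint_left]
        rintro ⟨p, q⟩ h1 h2
        simp only [Finset.mem_product, Finset.mem_compl] at h1 h2
        exact h2.1 h1.1
    · rintro ⟨p, q⟩ ht h
      simp only [Finset.mem_union, Finset.mem_product, Finset.mem_compl] at ht h
      subst h
      tauto
    · intro α
      simp only [Finset.mem_union, Finset.mem_product, Finset.mem_compl, Finset.mem_insert,
        Finset.mem_singleton]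
      split_ifs <;> simp_all
  · intro _
    rw [count_pairs x y hxy _ (({x, y} : Finset (Fin n))ᶜ).offDiag]
    · rw [Finset.offDiag_card, c2, ← Nat.mul_sub_one, Nat.sub_sub]
    · intro t ht; exact (Finset.mem_offDiag.1 ht).2.2
    · intro α
      have := hne α
      simp only [Finset.mem_offDiag, Finset.mem_compl, Finset.mem_insert, Finset.mem_singleton]
      split_ifs <;> simp_all
  · intro k hk _
    rw [count_pairs x y hxy _ ∅]
    · simp
    · simp
    · intro α
      simp only [Finset.notMem_empty, iff_false]
      split_ifs <;> omega
end

section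
/- Let m ≥ 2 and let β be a fixed-point-free involution of {1,…,2m} (β² = id and β(x) ≠ x for all x). Then: (1) c(k,β) = 0 for every odd integer k; and (2) for every nonnegative integer j, c(2j,β) = 2^m · m! · binom(m,j) · a(j), where a(j) is the number of fixed-point-free involutions τ of {0,1,…,2j−1} satisfying τ(x) ≠ σ(x) for all x, with σ the fixed-point-free involution of {0,1,…,2j−1} pairing 2i with 2i+1 (OEIS A053871; a(0) = 1). -/
/-- `a j` is the number of fixed-point-free involutions `τ` of `{0, …, 2j-1}` that
disagree everywhere with the fixed-point-free involution pairing `2i` with `2i+1`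
(OEIS A053871). -/
noncomputable def a (j : ℕ) : ℕ :=
  Nat.card {τ : Equiv.Perm (Fin (2 * j)) // τ * τ = 1 ∧ (∀ x, τ x ≠ x) ∧
    ∀ x : Fin (2 * j),
      (τ x : ℕ) ≠ (if (x : ℕ) % 2 = 0 then (x : ℕ) + 1 else (x : ℕ) - 1)}


namespace KC
open Equiv Finset

/-- Fixed-point-free involutions. -/
def FI {X : Type*} (τ : Perm X) : Prop := (∀ x, τ (τ x) = x) ∧ ∀ x, τ x ≠ x

theorem cycleType_FI {X : Type*} [Fintype X] [DecidableEq X] (g : Perm X) (hg : FI g) (n : ℕ)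
    (hn : Fintype.card X = 2 * n) : g.cycleType = Multiset.replicate n 2 := by
  have : Fact (Nat.Prime 2) := ⟨Nat.prime_two⟩
  have h2 : g ^ 2 = 1 := by
    ext x
    simp [pow_two, hg.1]
  have h := Perm.cycleType_of_pow_prime_eq_one h2
  have hs : g.support = univ := by
    ext x
    simp [hg.2]
  have hsum := Perm.sum_cycleType g
  rw [hs, card_univ, hn, h] at hsum
  simp at hsum
  have : g.cycleType.card = n := by omega
  rw [this] at h
  exact h

theorem exists_equiv {X Y : Type*} [Fintype X] [Fintype Y] (g : Perm X) (h : Perm Y)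
    (hg : FI g) (hh : FI h) (n : ℕ)
    (hX : Fintype.card X = 2 * n) (hY : Fintype.card Y = 2 * n) :
    ∃ e : X ≃ Y, ∀ x, e (g x) = h (e x) := by
  classical
  let e0 : X ≃ Y := Fintype.equivOfCardEq (hX.trans hY.symm)
  have hc : FI (e0.permCongr g) := by
    refine ⟨fun x => ?_, fun x hx => ?_⟩
    · simp [hg.1]
    · apply hg.2 (e0.symm x)
      apply e0.injective
      simpa using hx
  have : IsConj (e0.permCongr g) h := by
    rw [Perm.isConj_iff_cycleType_eq, cycleType_FI _ hc n hY, cycleType_FI _ hh n hY]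
  obtain ⟨c, hc⟩ := isConj_iff.1 this
  refine ⟨e0.trans c, fun x => ?_⟩
  rw [← hc]
  simp

theorem card_centralizer {X : Type*} [Fintype X] [DecidableEq X] (g : Perm X) (hg : FI g) (n : ℕ)
    (hn : Fintype.card X = 2 * n) :
    Nat.card (Subgroup.centralizer {g}) = 2 ^ n * Nat.factorial n := by
  rw [Perm.nat_card_centralizer, cycleType_FI g hg n hn, hn]
  rcases Nat.eq_zero_or_pos n with rfl | h
  · simp
  · have : (Multiset.replicate n 2).toFinset = {2} := by
      rw [Multiset.toFinset_replicate, if_neg (by omega)]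
    rw [this]
    simp [mul_comm n 2]

/-- The set of fixed-point-free involutions disagreeing with `g` everywhere. -/
def T {X : Type*} (g : Perm X) : Type _ := {τ : Perm X // FI τ ∧ ∀ x, τ x ≠ g x}

theorem card_T_congr {X Y : Type*} (g : Perm X) (h : Perm Y) (e : X ≃ Y)
    (he : ∀ x, e (g x) = h (e x)) : Nat.card (T g) = Nat.card (T h) := by
  refine Nat.card_congr (e.permCongr.subtypeEquiv fun τ => ?_)
  have he' : ∀ y, e.symm (h y) = g (e.symm y) := fun y => by
    rw [Equiv.symm_apply_eq, he]; simp
  constructor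
  · rintro ⟨⟨h1, h2⟩, h3⟩
    refine ⟨⟨fun x => by simp [h1], fun x hx => ?_⟩, fun x hx => ?_⟩
    · exact h2 (e.symm x) (by rw [Equiv.eq_symm_apply]; simpa using hx)
    · exact h3 (e.symm x) (by
        rw [← he', Equiv.eq_symm_apply]; simpa using hx)
  · rintro ⟨⟨h1, h2⟩, h3⟩
    refine ⟨⟨fun x => ?_, fun x hx => ?_⟩, fun x hx => ?_⟩
    · have := h1 (e x)
      simpa using this
    · exact h2 (e x) (by simp [hx])
    · exact h3 (e x) (by simp [hx, he])

/-- the standard pairing -/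
def sg (j : ℕ) : Perm (Fin (2 * j)) :=
  Function.Involutive.toPerm
    (fun x => ⟨if (x : ℕ) % 2 = 0 then (x : ℕ) + 1 else (x : ℕ) - 1, by
      have := x.2
      split_ifs <;> omega⟩) (by
      intro x
      ext
      simp only
      split_ifs <;> omega)

theorem sg_val (j : ℕ) (x : Fin (2 * j)) :
    (sg j x : ℕ) = if (x : ℕ) % 2 = 0 then (x : ℕ) + 1 else (x : ℕ) - 1 := rfl

theorem sg_FI (j : ℕ) : FI (sg j) := by
  refine ⟨fun x => ?_, fun x hx => ?_⟩
  · ext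
    simp only [sg_val]
    split_ifs <;> omega
  · have := congrArg Fin.val hx
    rw [sg_val] at this
    split_ifs at this <;> omega

theorem mul_self_iff {X : Type*} (τ : Perm X) : τ * τ = 1 ↔ ∀ x, τ (τ x) = x := by
  rw [Equiv.ext_iff]; rfl

theorem a_eq (j : ℕ) : a j = Nat.card (T (sg j)) := by
  unfold a T
  refine Nat.card_congr (Equiv.subtypeEquivRight fun τ => ?_)
  rw [mul_self_iff, FI, and_assoc]
  simp only [← sg_val, ne_eq, Fin.ext_iff]

theorem card_T {X : Type*} [Fintype X] (g : Perm X) (hg : FI g) (j : ℕ)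
    (hX : Fintype.card X = 2 * j) : Nat.card (T g) = a j := by
  obtain ⟨e, he⟩ := exists_equiv g (sg j) hg (sg_FI j) j hX (by simp)
  rw [a_eq, card_T_congr g (sg j) e he]

/-- Involutions disagreeing with `g` exactly on `p`. -/
theorem card_T_on {X : Type*} (g : Perm X) (hg : FI g) (p : X → Prop) [DecidablePred p]
    (hp : ∀ x, p (g x) ↔ p x) :
    Nat.card {τ : Perm X // FI τ ∧ ∀ x, τ x ≠ g x ↔ p x} = Nat.card (T (g.subtypePerm hp)) := by
  have key : ∀ τ : Perm X, FI τ → (∀ x, τ x ≠ g x ↔ p x) → ∀ x, p (τ x) ↔ p x := by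
    intro τ h1 h2 x
    rw [← h2, ← h2, h1.1, not_iff_not]
    constructor
    · intro h
      have := congrArg g h
      rw [hg.1] at this
      exact this.symm
    · intro h
      rw [h, hg.1]
  refine Nat.card_congr
    { toFun := fun τ => ⟨τ.1.subtypePerm (key τ.1 τ.2.1 τ.2.2), ?_⟩
      invFun := fun τ => ⟨Perm.subtypeCongr τ.1
        (g.subtypePerm (p := fun x => ¬ p x) fun x => not_congr (hp x)), ?_⟩
      left_inv := ?_
      right_inv := ?_ }
  · refine ⟨⟨fun x => ?_, fun x hx => ?_⟩, fun x hx => ?_⟩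
    · ext
      simp [τ.2.1.1]
    · exact τ.2.1.2 x (congrArg Subtype.val hx)
    · exact (τ.2.2 x).2 x.2 (congrArg Subtype.val hx)
  · have hl : ∀ x (h : p x), Perm.subtypeCongr τ.1
        (g.subtypePerm (p := fun x => ¬ p x) fun x => not_congr (hp x)) x = τ.1 ⟨x, h⟩ := by
      intro x h
      rw [Perm.subtypeCongr.left_apply _ _ h]
    have hr : ∀ x (h : ¬ p x), Perm.subtypeCongr τ.1
        (g.subtypePerm (p := fun x => ¬ p x) fun x => not_congr (hp x)) x = g x := by
      intro x h
      rw [Perm.subtypeCongr.right_apply _ _ h]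
      rfl
    refine ⟨⟨fun x => ?_, fun x => ?_⟩, fun x => ?_⟩
    · by_cases h : p x
      · rw [hl x h, hl _ (τ.1 ⟨x, h⟩).2]
        simp [τ.2.1.1]
      · rw [hr x h, hr _ (by rwa [hp]), hg.1]
    · by_cases h : p x
      · rw [hl x h]
        intro hx
        exact τ.2.1.2 ⟨x, h⟩ (Subtype.ext hx)
      · rw [hr x h]
        exact hg.2 x
    · by_cases h : p x
      · rw [hl x h]
        simp only [h, iff_true]
        intro hx
        exact τ.2.2 ⟨x, h⟩ (Subtype.ext hx)
      · rw [hr x h]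
        simp [h]
  · intro τ
    apply Subtype.ext
    ext x
    by_cases h : p x
    · simp [Perm.subtypeCongr.left_apply _ _ h]
    · simp only [Perm.subtypeCongr.right_apply _ _ h]
      have h3 : τ.1 x = g x := by
        by_contra h4
        exact h ((τ.2.2 x).1 h4)
      rw [h3]
      rfl
  · intro τ
    apply Subtype.ext
    ext x
    simp [Perm.subtypeCongr.left_apply _ _ x.2]

theorem card_sub {X : Type*} [Fintype X] (m : ℕ) (e : X ≃ Fin m × Bool) (S : Finset (Fin m)) :
    Fintype.card {x // (e x).1 ∈ S} = 2 * S.card := by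
  classical
  rw [Fintype.card_subtype]
  have : (univ.filter fun x => (e x).1 ∈ S) = (S ×ˢ (univ : Finset Bool)).map e.symm.toEmbedding := by
    ext x
    simp [Finset.mem_map_equiv]
  rw [this, card_map, card_product]
  simp [mul_comm]

theorem D_iff {X : Type*} (β τ : Perm X) (hβ : FI β) (hτ : FI τ) (x : X) :
    τ (β x) ≠ β (β x) ↔ τ x ≠ β x := by
  rw [not_iff_not, hβ.1]
  constructor
  · intro h
    have := congrArg τ h
    rw [hτ.1] at this
    exact this.symm
  · intro h
    rw [← h, hτ.1]

/-- the set of pairs of `β` on which `τ` disagrees with `β` -/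
def SS {X : Type*} [DecidableEq X] {m : ℕ} (e : X ≃ Fin m × Bool) (β τ : Perm X) :
    Finset (Fin m) :=
  univ.filter fun i => τ (e.symm (i, false)) ≠ β (e.symm (i, false))

theorem mem_SS {X : Type*} [DecidableEq X] {m : ℕ} (e : X ≃ Fin m × Bool) (β τ : Perm X)
    (hβ : FI β) (hτ : FI τ) (he : ∀ x, e (β x) = ((e x).1, !(e x).2)) (x : X) :
    (e x).1 ∈ SS e β τ ↔ τ x ≠ β x := by
  rw [SS, mem_filter]
  simp only [mem_univ, true_and]
  cases h : (e x).2
  · have : e.symm ((e x).1, false) = x := by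
      rw [Equiv.symm_apply_eq, ← h]
    rw [this]
  · have : e.symm ((e x).1, false) = β x := by
      rw [Equiv.symm_apply_eq, he, h]; rfl
    rw [this]
    exact D_iff β τ hβ hτ x

theorem card_D {X : Type*} [Fintype X] [DecidableEq X] {m : ℕ} (e : X ≃ Fin m × Bool)
    (β τ : Perm X)
    (hβ : FI β) (hτ : FI τ) (he : ∀ x, e (β x) = ((e x).1, !(e x).2)) :
    (univ.filter fun x => τ x ≠ β x).card = 2 * (SS e β τ).card := by
  rw [← card_sub m e, Fintype.card_subtype]
  simp only [mem_SS e β τ hβ hτ he]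

theorem exists_e {X : Type*} [Fintype X] (m : ℕ) (hX : Fintype.card X = 2 * m) (β : Perm X)
    (hβ : FI β) : ∃ e : X ≃ Fin m × Bool, ∀ x, e (β x) = ((e x).1, !(e x).2) := by
  let f : Perm (Fin m × Bool) :=
    Function.Involutive.toPerm (fun y => (y.1, !y.2)) (by intro y; simp)
  have hf : ∀ y, f y = (y.1, !y.2) := fun y => rfl
  obtain ⟨e, he⟩ := exists_equiv β f hβ
    ⟨fun y => by simp [hf], fun y hy => by
      have := congrArg Prod.snd hy
      simp [hf] at this⟩ m hX (by simp [mul_comm])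
  exact ⟨e, he⟩

theorem card_tau {X : Type*} [Fintype X] [DecidableEq X] (m : ℕ) (hX : Fintype.card X = 2 * m)
    (β : Perm X) (hβ : FI β) (j : ℕ) [DecidablePred (FI : Perm X → Prop)] :
    (univ.filter fun τ : Perm X => FI τ ∧ (univ.filter fun x => τ x ≠ β x).card = 2 * j).card
      = Nat.choose m j * a j := by
  obtain ⟨e, he⟩ := exists_e m hX β hβ
  rw [card_eq_sum_card_fiberwise (f := SS e β) (t := powersetCard j univ)]
  · rw [sum_const_nat (m := a j)]
    · simp
    · intro S hS
      rw [mem_powersetCard_univ] at hS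
      have hp : ∀ x, (e (β x)).1 ∈ S ↔ (e x).1 ∈ S := fun x => by rw [he]
      rw [← card_T (β.subtypePerm (p := fun x => (e x).1 ∈ S) hp)
        ⟨fun x => by ext; simp [hβ.1], fun x hx => hβ.2 x (congrArg Subtype.val hx)⟩ j
        (by rw [card_sub, hS]), ← card_T_on β hβ, Nat.card_eq_fintype_card, Fintype.card_subtype,
        filter_filter]
      congr 1
      ext τ
      simp only [mem_filter, mem_univ, true_and]
      constructor
      · rintro ⟨⟨h1, -⟩, rfl⟩
        exact ⟨h1, fun x => (mem_SS e β τ hβ h1 he x).symm⟩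
      · rintro ⟨h1, h2⟩
        have : SS e β τ = S := by
          ext i
          have := mem_SS e β τ hβ h1 he (e.symm (i, false))
          rw [h2] at this
          simpa using this
        exact ⟨⟨h1, by rw [card_D e β τ hβ h1 he, this, hS]⟩, this⟩
  · intro τ hτ
    simp only [coe_filter, mem_univ, true_and, Set.mem_ofPred_eq] at hτ
    have := card_D e β τ hβ hτ.1 he
    simp only [mem_coe, mem_powersetCard_univ]
    omega

theorem conj_FI {X : Type*} (α β : Perm X) (hβ : FI β) : FI (α * β * α⁻¹) := by
  refine ⟨fun x => by simp [hβ.1], fun x hx => hβ.2 (α⁻¹ x) ?_⟩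
  simp only [Perm.mul_apply] at hx
  rw [Perm.eq_inv_iff_eq, hx]

theorem ham_eq {n : ℕ} (α β : Perm (Fin n)) :
    ham (α * β) (β * α) = (univ.filter fun x => (α * β * α⁻¹) x ≠ β x).card := by
  unfold ham
  refine card_equiv α fun x => ?_
  rw [mem_filter, mem_filter]
  simp

theorem kcomm_eq (m k : ℕ) (β : Perm (Fin (2 * m))) (hβ : FI β)
    [DecidablePred (FI : Perm (Fin (2 * m)) → Prop)] :
    kcomm k β = (univ.filter fun τ : Perm (Fin (2 * m)) =>
      FI τ ∧ (univ.filter fun x => τ x ≠ β x).card = k).card * (2 ^ m * Nat.factorial m) := by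
  classical
  unfold kcomm
  rw [Nat.card_eq_fintype_card, Fintype.card_subtype,
    card_eq_sum_card_fiberwise (f := fun α => α * β * α⁻¹)
      (t := univ.filter fun τ : Perm (Fin (2 * m)) =>
      FI τ ∧ (univ.filter fun x => τ x ≠ β x).card = k)]
  · apply sum_const_nat
    intro τ hτ
    simp only [mem_filter, mem_univ, true_and] at hτ
    obtain ⟨h1, h2⟩ := hτ
    have : IsConj β τ := by
      rw [Perm.isConj_iff_cycleType_eq, cycleType_FI _ hβ m (by simp),
        cycleType_FI _ h1 m (by simp)]
    obtain ⟨c, hc⟩ := isConj_iff.1 this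
    rw [← card_centralizer β hβ m (by simp), Nat.card_eq_fintype_card, Fintype.card_subtype,
      filter_filter]
    refine card_equiv (Equiv.mulLeft c⁻¹) fun α => ?_
    simp only [mem_filter, mem_univ, true_and, ham_eq, Subgroup.mem_centralizer_singleton_iff,
      Equiv.coe_mulLeft]
    have : α * β * α⁻¹ = τ ↔ c⁻¹ * α * β = β * (c⁻¹ * α) := by
      rw [← hc, mul_inv_eq_iff_eq_mul]
      constructor
      · intro h
        rw [mul_assoc, h]; group
      · intro h
        have := congrArg (c * ·) h
        simp only [mul_assoc] at this ⊢
        simpa using this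
    constructor
    · rintro ⟨-, h⟩
      exact this.1 h
    · intro h
      have h3 := this.2 h
      exact ⟨by rw [h3, h2], h3⟩
  · intro α hα
    simp only [coe_filter, mem_univ, true_and, Set.mem_ofPred_eq, ham_eq] at hα ⊢
    exact ⟨conj_FI α β hβ, hα⟩

end KC

theorem stmt19 (m : ℕ) (hm : 2 ≤ m) (β : Equiv.Perm (Fin (2 * m)))
    (hβ1 : β * β = 1) (hβ2 : ∀ x, β x ≠ x) :
    (∀ k, Odd k → kcomm k β = 0) ∧
    (∀ j : ℕ, kcomm (2 * j) β = 2 ^ m * Nat.factorial m * Nat.choose m j * a j) := by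
  classical
  have hβ : KC.FI β := ⟨(KC.mul_self_iff β).1 hβ1, hβ2⟩
  constructor
  · intro k hk
    rw [KC.kcomm_eq m k β hβ, Finset.card_eq_zero.2, zero_mul]
    rw [Finset.filter_eq_empty_iff]
    rintro τ - ⟨h1, h2⟩
    obtain ⟨e, he⟩ := KC.exists_e m (by simp) β hβ
    rw [KC.card_D e β τ hβ h1 he] at h2
    obtain ⟨r, hr⟩ := hk
    omega
  · intro j
    rw [KC.kcomm_eq m _ β hβ, KC.card_tau m (by simp) β hβ j]
    ring
end
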